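/- Let N > 4 and 0 < m ≤ (N-4)/(N-2). Fix k > 0 and let B = B_k be the Barenblatt solution with extinction time T. Let u be a solution of the fast diffusion equation on ℝ^N × (0,T) with initial value u₀ satisfying u₀ ≤ B(·,0) and |u₀(x) - B(x,0)| ≤ f(x) for all x, where f ∈ L¹(ℝ^N) is positive and radially symmetric, and assume u satisfies the Aronson–Bénilan inequality ∂ₜu ≤ u/((1-m)t). Then there exist positive constants C₁, C₂, r₀ and τ₀ such that for all τ ≥ τ₀ and all x with |x| ≥ r₀, the rescaled solution satisfies C₁/(|x|² + 1)^{1/(1-m)} ≤ ũ(x,τ) ≤ C₂/(|x|² + 1)^{1/(1-m)}. -/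

import Mathlib

/-!
The upper bound is the comparison principle `u ≤ B`; the lower bound follows from an estimate on the
time integral of `B ^ m - u ^ m`.

*Comparison* (`comparison`). No decay of `u` at spatial infinity is assumed, so `u` is compared on
balls `|x| < R` with `(B ^ m + e ^ (μ t) φ_R) ^ (1 / m)`, where `φ_R` is infinite on `|x| = R` and
satisfies `Δ φ_R ≤ φ_R ^ (1 / m) / m` (`hasLap_phiR`). This is a strict supersolution
(`supersol_alg`), with `μ` independent of `R`,
and `φ_R → 0` pointwise as `R → ∞`, which leaves `u ^ m ≤ B ^ m`.

*Potential bound* (`integral_bound`). The function `W = ∫ (B ^ m - u ^ m) ds` over `[ε, t']`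
satisfies `Δ W = (B - u)(t') - (B - u)(ε) ≥ -(B - u)(ε)`, by the equation and the comparison. As
`ε → 0` the right-hand side tends, locally uniformly, to the negative of the initial difference,
which is dominated by a continuous radial function of finite mass (`radial_majorant`). The maximum
principle on annuli `1 ≤ |x| ≤ R` bounds `W` by the radial Newtonian potential of this majorant
(`radial_potential`, `annulus_bound`), up to a term that vanishes as `R → ∞` since `B ^ m` decays.
Hence `W ≤ K |x| ^ (2 - N)` for `|x| ≥ 1`, with `K` independent of time.

*Pointwise lower bound* (`outer_lower`). By the Aronson–Bénilan inequality `u` can grow at most by a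
constant factor on `[t, (t + T) / 2]` when `t ≥ T / 2` (`ab_bound`), while `B ^ m` is at least
`c ((T - t) / |x| ^ 2) ^ (m / (1 - m))` there when `|x| ≥ (T - t) ^ γ`. If `u (x, t) ^ m` were much
smaller than this, the integral of `B ^ m - u ^ m` over `[t, (t + T) / 2]` would exceed
`K |x| ^ (2 - N)` as soon as `|x| ≥ r₀ (T - t) ^ γ`: the exponent `γ` is precisely the one for which
both sides scale in the same way. Rescaling gives the claim.

The Laplacian is handled through second derivatives along coordinate lines (`HasLap`), which suffices
for the second derivative test and is easy to produce for radial functions and for time integrals.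
-/

open MeasureTheory Real Filter Topology RealInnerProductSpace

noncomputable section

abbrev Euc (N : ℕ) := EuclideanSpace ℝ (Fin N)

/-- Laplacian: trace of the second derivative. -/
def lapl {N : ℕ} (f : Euc N → ℝ) (x : Euc N) : ℝ :=
  ∑ i : Fin N, iteratedFDeriv ℝ 2 f x ![EuclideanSpace.single i 1, EuclideanSpace.single i 1]

/-- The constant C* = 2m(N-2-mN)/(1-m). -/
def Cst (N : ℕ) (m : ℝ) : ℝ := 2 * m * ((N : ℝ) - 2 - m * N) / (1 - m)

/-- β = N/(N-2-Nm). -/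
def betaC (N : ℕ) (m : ℝ) : ℝ := (N : ℝ) / ((N : ℝ) - 2 - N * m)

/-- γ = -β/N. -/
def gammaC (N : ℕ) (m : ℝ) : ℝ := -betaC N m / N

/-- Barenblatt solution with extinction time T. -/
def Bb (N : ℕ) (m T k : ℝ) (x : Euc N) (t : ℝ) : ℝ :=
  (Cst N m * (T - t) / (k * (T - t) ^ (2 * gammaC N m) + ‖x‖ ^ 2)) ^ (1 / (1 - m))

/-- Rescaled Barenblatt profile. -/
def BbTil (N : ℕ) (m k : ℝ) (x : Euc N) : ℝ :=
  (Cst N m / (k + ‖x‖ ^ 2)) ^ (1 / (1 - m))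

/-- u is a solution of the fast diffusion equation on ℝ^N × (0,T) with initial value u₀. -/
def IsFDESol (N : ℕ) (m T : ℝ) (u : Euc N → ℝ → ℝ) (u₀ : Euc N → ℝ) : Prop :=
  (∀ x : Euc N, ∀ t ∈ Set.Ioo (0:ℝ) T, 0 < u x t) ∧
  ContDiffOn ℝ (⊤ : ℕ∞) (fun p : Euc N × ℝ => u p.1 p.2) (Set.univ ×ˢ Set.Ioo (0:ℝ) T) ∧
  ContinuousOn (fun p : Euc N × ℝ => u p.1 p.2) (Set.univ ×ˢ Set.Ico (0:ℝ) T) ∧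
  (∀ x, u x 0 = u₀ x) ∧
  (∀ x : Euc N, ∀ t ∈ Set.Ioo (0:ℝ) T,
    deriv (fun s => u x s) t = lapl (fun y => u y t ^ m) x)

/-- Rescaled solution ũ(x,τ) = (T-t)^(-β) u(x (T-t)^γ, t), τ = -log(T-t). -/
def rescaleSol (N : ℕ) (m T : ℝ) (u : Euc N → ℝ → ℝ) (x : Euc N) (τ : ℝ) : ℝ :=
  Real.exp (betaC N m * τ) * u (Real.exp (-gammaC N m * τ) • x) (T - Real.exp (-τ))

/-- f is radially symmetric. -/
def IsRadial {N : ℕ} (f : Euc N → ℝ) : Prop := ∀ x y : Euc N, ‖x‖ = ‖y‖ → f x = f y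

/-! ### Laplacians along coordinate lines -/

/-- `F` is differentiable along the `i`-th coordinate line near `x`, with second derivative `c`
along that line at `x`. -/
def HasSecond {N : ℕ} (F : Euc N → ℝ) (x : Euc N) (i : Fin N) (c : ℝ) : Prop :=
  ∃ D : ℝ → ℝ, (∀ᶠ h in 𝓝 (0:ℝ),
    HasDerivAt (fun h : ℝ => F (x + h • EuclideanSpace.single i (1:ℝ))) (D h) h) ∧
    HasDerivAt D c 0

/-- All pure second derivatives of `F` at `x` exist along coordinate lines, and they sum to `L`.
This needs neither joint differentiability nor a second Fréchet derivative of `F`. -/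
def HasLap {N : ℕ} (F : Euc N → ℝ) (x : Euc N) (L : ℝ) : Prop :=
  ∃ c : Fin N → ℝ, (∀ i, HasSecond F x i (c i)) ∧ ∑ i, c i = L

lemma HasSecond.add {N : ℕ} {F G : Euc N → ℝ} {x : Euc N} {i : Fin N} {c d : ℝ}
    (hF : HasSecond F x i c) (hG : HasSecond G x i d) :
    HasSecond (fun y => F y + G y) x i (c + d) := by
  obtain ⟨F', h1, h2⟩ := hF
  obtain ⟨G', h3, h4⟩ := hG
  refine ⟨fun h => F' h + G' h, ?_, h2.add h4⟩
  filter_upwards [h1, h3] with h ha hb using ha.add hb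

lemma HasSecond.const_mul {N : ℕ} {F : Euc N → ℝ} {x : Euc N} {i : Fin N} {c : ℝ} (a : ℝ)
    (hF : HasSecond F x i c) : HasSecond (fun y => a * F y) x i (a * c) := by
  obtain ⟨F', h1, h2⟩ := hF
  refine ⟨fun h => a * F' h, ?_, h2.const_mul a⟩
  filter_upwards [h1] with h ha using ha.const_mul a

lemma HasSecond.unique {N : ℕ} {F : Euc N → ℝ} {x : Euc N} {i : Fin N} {c d : ℝ}
    (hF : HasSecond F x i c) (hG : HasSecond F x i d) : c = d := by
  obtain ⟨F', h1, h2⟩ := hF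
  obtain ⟨G', h3, h4⟩ := hG
  have h : F' =ᶠ[𝓝 0] G' := by
    filter_upwards [h1, h3] with h ha hb using ha.unique hb
  exact h2.unique (h4.congr_of_eventuallyEq h)

lemma HasLap.add {N : ℕ} {F G : Euc N → ℝ} {x : Euc N} {c d : ℝ}
    (hF : HasLap F x c) (hG : HasLap G x d) : HasLap (fun y => F y + G y) x (c + d) := by
  obtain ⟨a, h1, h2⟩ := hF
  obtain ⟨b, h3, h4⟩ := hG
  exact ⟨fun i => a i + b i, fun i => (h1 i).add (h3 i), by rw [Finset.sum_add_distrib, h2, h4]⟩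

lemma HasLap.const_mul {N : ℕ} {F : Euc N → ℝ} {x : Euc N} {c : ℝ} (a : ℝ)
    (hF : HasLap F x c) : HasLap (fun y => a * F y) x (a * c) := by
  obtain ⟨b, h1, h2⟩ := hF
  exact ⟨fun i => a * b i, fun i => (h1 i).const_mul a, by rw [← Finset.mul_sum, h2]⟩

lemma HasLap.sub {N : ℕ} {F G : Euc N → ℝ} {x : Euc N} {c d : ℝ}
    (hF : HasLap F x c) (hG : HasLap G x d) : HasLap (fun y => F y - G y) x (c - d) := by
  have := hF.add (hG.const_mul (-1))
  convert this using 1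
  · ext y; ring
  · ring

lemma HasLap.unique {N : ℕ} {F : Euc N → ℝ} {x : Euc N} {c d : ℝ}
    (hF : HasLap F x c) (hG : HasLap F x d) : c = d := by
  obtain ⟨a, h1, h2⟩ := hF
  obtain ⟨b, h3, h4⟩ := hG
  rw [← h2, ← h4]
  exact Finset.sum_congr rfl fun i _ => (h1 i).unique (h3 i)

lemma tendsto_line {N : ℕ} (x e : Euc N) :
    Tendsto (fun h : ℝ => x + h • e) (𝓝 0) (𝓝 x) := by
  have : Continuous (fun h : ℝ => x + h • e) := by fun_prop
  simpa using this.tendsto 0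

lemma HasLap.congr {N : ℕ} {F G : Euc N → ℝ} {x : Euc N} {c : ℝ}
    (hF : HasLap F x c) (h : F =ᶠ[𝓝 x] G) : HasLap G x c := by
  obtain ⟨a, h1, h2⟩ := hF
  refine ⟨a, fun i => ?_, h2⟩
  obtain ⟨F', h3, h4⟩ := h1 i
  refine ⟨F', ?_, h4⟩
  have h5 := ((tendsto_line x (EuclideanSpace.single i (1:ℝ))).eventually h).eventually_nhds
  filter_upwards [h3, h5] with s h6 h7
  exact h6.congr_of_eventuallyEq (h7.mono fun _ h => h.symm)

/-- Second derivative test: a positive second derivative at a critical maximum would make the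
point a local minimum too, hence the function locally constant. -/
lemma HasSecond.nonpos {N : ℕ} {F : Euc N → ℝ} {x : Euc N} {i : Fin N} {c : ℝ}
    (hF : HasSecond F x i c) (hmax : IsLocalMax F x) : c ≤ 0 := by
  obtain ⟨F', h1, h2⟩ := hF
  by_contra! hc
  set f : ℝ → ℝ := fun h => F (x + h • EuclideanSpace.single i (1:ℝ)) with hf
  have hmaxf : IsLocalMax f 0 := by
    have := (tendsto_line x (EuclideanSpace.single i (1:ℝ))).eventually hmax
    filter_upwards [this] with h hh
    simpa [hf] using hh
  have hd : deriv f =ᶠ[𝓝 0] F' := by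
    filter_upwards [h1] with h ha using ha.deriv
  have hdd : deriv (deriv f) 0 = c := by
    rw [hd.deriv_eq]; exact h2.deriv
  have hmin : IsLocalMin f 0 := isLocalMin_of_deriv_deriv_pos (by rw [hdd]; exact hc)
    hmaxf.deriv_eq_zero h1.self_of_nhds.continuousAt
  have hconst : f =ᶠ[𝓝 0] fun _ => f 0 := by
    filter_upwards [hmin, hmaxf] with h ha hb using le_antisymm hb ha
  have : deriv (deriv f) 0 = 0 := by
    have h3 : deriv f =ᶠ[𝓝 0] fun _ => 0 := by
      filter_upwards [hconst.eventually_nhds] with h ha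
      rw [Filter.EventuallyEq.deriv_eq ha]; simp
    rw [h3.deriv_eq]; simp
  linarith

lemma HasLap.nonpos {N : ℕ} {F : Euc N → ℝ} {x : Euc N} {c : ℝ}
    (hF : HasLap F x c) (hmax : IsLocalMax F x) : c ≤ 0 := by
  obtain ⟨a, h1, h2⟩ := hF
  rw [← h2]
  exact Finset.sum_nonpos fun i _ => (h1 i).nonpos hmax

lemma hasDerivAt_line {N : ℕ} (x e : Euc N) (h : ℝ) :
    HasDerivAt (fun h : ℝ => x + h • e) e h := by
  simpa using ((hasDerivAt_id h).smul_const e).const_add x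

lemma hasLap_lapl {N : ℕ} {F : Euc N → ℝ} {x : Euc N} (hF : ContDiffAt ℝ 2 F x) :
    HasLap F x (lapl F x) := by
  refine ⟨_, fun i => ?_, rfl⟩
  set e : Euc N := EuclideanSpace.single i (1:ℝ) with he
  refine ⟨fun h => fderiv ℝ F (x + h • e) e, ?_, ?_⟩
  · have h1 : ∀ᶠ y in 𝓝 x, ContDiffAt ℝ 2 F y := hF.eventually (by simp)
    filter_upwards [(tendsto_line x e).eventually h1] with h hh
    exact (hh.differentiableAt (by norm_num)).hasFDerivAt.comp_hasDerivAt h (hasDerivAt_line x e h)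
  · rw [iteratedFDeriv_two_apply]
    have h1 : DifferentiableAt ℝ (fderiv ℝ F) x :=
      (hF.fderiv_right (m := 1) (by norm_num)).differentiableAt (by norm_num)
    have h2 : HasDerivAt (fun h : ℝ => fderiv ℝ F (x + h • e)) (fderiv ℝ (fderiv ℝ F) x e) 0 := by
      have h3 : HasFDerivAt (fderiv ℝ F) (fderiv ℝ (fderiv ℝ F) x) (x + (0:ℝ) • e) := by
        simpa using h1.hasFDerivAt
      exact h3.comp_hasDerivAt (0:ℝ) (hasDerivAt_line x e 0)
    have := h2.clm_apply (hasDerivAt_const (0:ℝ) e)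
    simpa using this

/-- The Laplacian of the radial function `ω (‖x‖ ^ 2)` is `4 ‖x‖ ^ 2 ω'' + 2 N ω'`. -/
lemma hasLap_radial {N : ℕ} {ω ω' : ℝ → ℝ} {ω'' : ℝ} {x : Euc N}
    (h1 : ∀ᶠ r in 𝓝 (‖x‖ ^ 2), HasDerivAt ω (ω' r) r) (h2 : HasDerivAt ω' ω'' (‖x‖ ^ 2)) :
    HasLap (fun y => ω (‖y‖ ^ 2)) x (4 * ‖x‖ ^ 2 * ω'' + 2 * N * ω' (‖x‖ ^ 2)) := by
  refine ⟨fun i => 4 * (x i) ^ 2 * ω'' + 2 * ω' (‖x‖ ^ 2), fun i => ?_, ?_⟩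
  · set e : Euc N := EuclideanSpace.single i (1:ℝ) with he
    have hn : ∀ h : ℝ, ‖x + h • e‖ ^ 2 = ‖x‖ ^ 2 + 2 * h * x i + h ^ 2 := by
      intro h
      rw [norm_add_sq_real, inner_smul_right, norm_smul, he, EuclideanSpace.inner_single_right]
      simp
      ring
    have hd : ∀ h : ℝ, HasDerivAt (fun h : ℝ => ‖x + h • e‖ ^ 2) (2 * x i + 2 * h) h := by
      intro h
      simp_rw [hn]
      have := (((hasDerivAt_id h).const_mul (2:ℝ)).mul_const (x i)).const_add (‖x‖ ^ 2)
      have := this.add ((hasDerivAt_id h).pow 2)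
      refine (this.congr_deriv ?_)
      simp
    have hx0 : ‖x + (0:ℝ) • e‖ ^ 2 = ‖x‖ ^ 2 := by simp
    refine ⟨fun h => ω' (‖x + h • e‖ ^ 2) * (2 * x i + 2 * h), ?_, ?_⟩
    · have ht : Tendsto (fun h : ℝ => ‖x + h • e‖ ^ 2) (𝓝 0) (𝓝 (‖x‖ ^ 2)) :=
        (tendsto_line x e).norm.pow 2
      filter_upwards [ht.eventually h1] with h hh
      exact HasDerivAt.comp h hh (hd h)
    · have h2' : HasDerivAt ω' ω'' (‖x + (0:ℝ) • e‖ ^ 2) := by rw [hx0]; exact h2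
      have ha := HasDerivAt.comp (0:ℝ) h2' (hd 0)
      have hb : HasDerivAt (fun h : ℝ => 2 * x i + 2 * h) 2 0 := by
        simpa using ((hasDerivAt_id (0:ℝ)).const_mul 2).const_add (2 * x i)
      refine (ha.mul hb).congr_deriv ?_
      simp only [Function.comp, hx0]
      ring
  · rw [Finset.sum_add_distrib, ← Finset.sum_mul, ← Finset.mul_sum, EuclideanSpace.norm_sq_eq]
    simp
    ring

/-! ### Laplacians of time integrals -/

/-- Differentiation under a time integral over a compact interval of smoothness. -/
lemma hasDerivAt_param {T a b : ℝ} {g : ℝ × ℝ → ℝ} (ha : 0 < a) (hab : a ≤ b) (hb : b < T)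
    (hg : ContDiffOn ℝ (⊤ : ℕ∞) g (Set.univ ×ˢ Set.Ioo (0:ℝ) T)) (h : ℝ) :
    HasDerivAt (fun h => ∫ s in a..b, g (h, s))
      (∫ s in a..b, fderiv ℝ g (h, s) (1, 0)) h := by
  have hop : IsOpen ((Set.univ : Set ℝ) ×ˢ Set.Ioo (0:ℝ) T) := isOpen_univ.prod isOpen_Ioo
  have hsub : Set.Icc a b ⊆ Set.Ioo 0 T := fun s hs => ⟨ha.trans_le hs.1, hs.2.trans_lt hb⟩
  have hgc : ContinuousOn g (Set.univ ×ˢ Set.Ioo (0:ℝ) T) := hg.continuousOn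
  have hg1 : ContinuousOn (fun p => fderiv ℝ g p (1, 0)) (Set.univ ×ˢ Set.Ioo (0:ℝ) T) :=
    (hg.continuousOn_fderiv_of_isOpen hop (by simp)).clm_apply continuousOn_const
  have hpair : ∀ x : ℝ, ContinuousOn (fun s : ℝ => (x, s)) (Set.Icc a b) := fun x => by fun_prop
  have hmap : ∀ x : ℝ, Set.MapsTo (fun s : ℝ => (x, s)) (Set.Icc a b)
      (Set.univ ×ˢ Set.Ioo (0:ℝ) T) := fun x s hs => ⟨trivial, hsub hs⟩
  have hgx : ∀ x : ℝ, ContinuousOn (fun s => g (x, s)) (Set.Icc a b) :=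
    fun x => hgc.comp (hpair x) (hmap x)
  have hg1x : ∀ x : ℝ, ContinuousOn (fun s => fderiv ℝ g (x, s) (1, 0)) (Set.Icc a b) :=
    fun x => hg1.comp (hpair x) (hmap x)
  have hI : Set.uIoc a b ⊆ Set.Icc a b := by rw [Set.uIoc_of_le hab]; exact Set.Ioc_subset_Icc_self
  -- the derivative is bounded on the compact set `[h - 1, h + 1] × [a, b]`
  obtain ⟨C, hC⟩ := (isCompact_Icc (a := h - 1) (b := h + 1)).prod (isCompact_Icc (a := a) (b := b))
    |>.exists_bound_of_continuousOn (hg1.mono (fun p hp => ⟨trivial, hsub hp.2⟩))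
  refine (intervalIntegral.hasDerivAt_integral_of_dominated_loc_of_deriv_le
    (F := fun h s => g (h, s)) (F' := fun h s => fderiv ℝ g (h, s) (1, 0)) (bound := fun _ => C)
    (s := Set.Icc (h - 1) (h + 1)) (Icc_mem_nhds (by linarith) (by linarith)) ?_ ?_ ?_ ?_ ?_ ?_).2
  · exact Eventually.of_forall fun x =>
      ((hgx x).mono hI).aestronglyMeasurable measurableSet_uIoc
  · exact ((hgx h).intervalIntegrable_of_Icc hab)
  · exact ((hg1x h).mono hI).aestronglyMeasurable measurableSet_uIoc
  · exact Eventually.of_forall fun s hs x hx => hC (x, s) ⟨hx, hI hs⟩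
  · exact intervalIntegrable_const
  · refine Eventually.of_forall fun s hs x hx => ?_
    have h1 : DifferentiableAt ℝ g (x, s) :=
      (hg.contDiffAt (hop.mem_nhds ⟨trivial, hsub (hI hs)⟩)).differentiableAt (by simp)
    have h2 : HasDerivAt (fun x : ℝ => (x, s)) (1, 0) x :=
      (hasDerivAt_id x).prodMk (hasDerivAt_const x s)
    exact h1.hasFDerivAt.comp_hasDerivAt x h2

/-- If `∂ₜ U = Δ v`, the time integral of `v` over `[a, b]` has Laplacian `U(b) - U(a)`. -/
lemma hasLap_integral {N : ℕ} {T a b : ℝ} {v U : Euc N → ℝ → ℝ} (ha : 0 < a) (hab : a ≤ b)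
    (hb : b < T)
    (hv : ContDiffOn ℝ (⊤ : ℕ∞) (fun p : Euc N × ℝ => v p.1 p.2) (Set.univ ×ˢ Set.Ioo (0:ℝ) T))
    (hU : ContDiffOn ℝ (⊤ : ℕ∞) (fun p : Euc N × ℝ => U p.1 p.2) (Set.univ ×ˢ Set.Ioo (0:ℝ) T))
    (heq : ∀ x : Euc N, ∀ t ∈ Set.Ioo (0:ℝ) T,
      deriv (fun s => U x s) t = lapl (fun y => v y t) x) (x : Euc N) :
    HasLap (fun x => ∫ s in a..b, v x s) x (U x b - U x a) := by
  have hop : IsOpen ((Set.univ : Set ℝ) ×ˢ Set.Ioo (0:ℝ) T) := isOpen_univ.prod isOpen_Ioo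
  have hopE : IsOpen ((Set.univ : Set (Euc N)) ×ˢ Set.Ioo (0:ℝ) T) := isOpen_univ.prod isOpen_Ioo
  have hsub : Set.Icc a b ⊆ Set.Ioo 0 T := fun s hs => ⟨ha.trans_le hs.1, hs.2.trans_lt hb⟩
  have hu : Set.uIcc a b = Set.Icc a b := Set.uIcc_of_le hab
  set e : Fin N → Euc N := fun i => EuclideanSpace.single i (1:ℝ) with he
  set g : Fin N → ℝ × ℝ → ℝ := fun i p => v (x + p.1 • e i) p.2 with hgdef
  have hg : ∀ i, ContDiffOn ℝ (⊤ : ℕ∞) (g i) (Set.univ ×ˢ Set.Ioo (0:ℝ) T) := by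
    intro i
    have h1 : ContDiff ℝ (⊤ : ℕ∞) (fun p : ℝ × ℝ => ((x + p.1 • e i, p.2) : Euc N × ℝ)) := by
      fun_prop
    exact hv.comp h1.contDiffOn (fun p hp => ⟨trivial, hp.2⟩)
  set g1 : Fin N → ℝ × ℝ → ℝ := fun i p => fderiv ℝ (g i) p (1, 0) with hg1def
  have hg1 : ∀ i, ContDiffOn ℝ (⊤ : ℕ∞) (g1 i) (Set.univ ×ˢ Set.Ioo (0:ℝ) T) := fun i =>
    ((hg i).fderiv_of_isOpen hop (by simp)).clm_apply contDiffOn_const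
  set g2 : Fin N → ℝ × ℝ → ℝ := fun i p => fderiv ℝ (g1 i) p (1, 0) with hg2def
  have hg2 : ∀ i, ContDiffOn ℝ (⊤ : ℕ∞) (g2 i) (Set.univ ×ˢ Set.Ioo (0:ℝ) T) := fun i =>
    ((hg1 i).fderiv_of_isOpen hop (by simp)).clm_apply contDiffOn_const
  have hder : ∀ (f : ℝ × ℝ → ℝ), ContDiffOn ℝ (⊤ : ℕ∞) f (Set.univ ×ˢ Set.Ioo (0:ℝ) T) →
      ∀ s ∈ Set.Ioo (0:ℝ) T, ∀ h, HasDerivAt (fun h => f (h, s)) (fderiv ℝ f (h, s) (1, 0)) h := by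
    intro f hf s hs h
    have h1 : DifferentiableAt ℝ f (h, s) :=
      (hf.contDiffAt (hop.mem_nhds ⟨trivial, hs⟩)).differentiableAt (by simp)
    exact h1.hasFDerivAt.comp_hasDerivAt h ((hasDerivAt_id h).prodMk (hasDerivAt_const h s))
  have hcont2 : ∀ i, ContinuousOn (fun s => g2 i (0, s)) (Set.Icc a b) := fun i =>
    (hg2 i).continuousOn.comp (by fun_prop) (fun s hs => ⟨trivial, hsub hs⟩)
  refine ⟨fun i => ∫ s in a..b, g2 i (0, s), fun i => ?_, ?_⟩
  · exact ⟨fun h => ∫ s in a..b, g1 i (h, s),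
      Eventually.of_forall (hasDerivAt_param ha hab hb (hg i)), hasDerivAt_param ha hab hb (hg1 i) 0⟩
  · rw [← intervalIntegral.integral_finsetSum
      (fun i _ => (hcont2 i).intervalIntegrable_of_Icc hab)]
    have hlap : ∀ s ∈ Set.Icc a b, ∑ i, g2 i (0, s) = deriv (fun s => U x s) s := by
      intro s hs
      rw [heq x s (hsub hs)]
      have hvs : ContDiffAt ℝ 2 (fun y => v y s) x := by
        have h1 : ContDiffAt ℝ (⊤ : ℕ∞) (fun p : Euc N × ℝ => v p.1 p.2) (x, s) :=
          hv.contDiffAt (hopE.mem_nhds ⟨trivial, hsub hs⟩)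
        have h2 : ContDiffAt ℝ (⊤ : ℕ∞) (fun y : Euc N => (y, s)) x := by fun_prop
        have h3 : ContDiffAt ℝ (⊤ : ℕ∞) (fun y => v y s) x :=
          ContDiffAt.comp (g := fun p : Euc N × ℝ => v p.1 p.2) (f := fun y : Euc N => (y, s)) x h1 h2
        exact h3.of_le (WithTop.coe_le_coe.2 le_top)
      refine HasLap.unique (F := fun y => v y s) ⟨fun i => g2 i (0, s), fun i => ?_, rfl⟩
        (hasLap_lapl hvs)
      exact ⟨fun h => g1 i (h, s), Eventually.of_forall (hder (g i) (hg i) s (hsub hs)),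
        hder (g1 i) (hg1 i) s (hsub hs) 0⟩
    have hdU : ∀ s ∈ Set.Icc a b, HasDerivAt (fun s => U x s) (∑ i, g2 i (0, s)) s := by
      intro s hs
      rw [hlap s hs]
      have h1 : DifferentiableAt ℝ (fun p : Euc N × ℝ => U p.1 p.2) (x, s) :=
        (hU.contDiffAt (hopE.mem_nhds ⟨trivial, hsub hs⟩)).differentiableAt (by simp)
      have h2 : DifferentiableAt ℝ (fun s : ℝ => (x, s)) s := by fun_prop
      exact (DifferentiableAt.comp (f := fun s : ℝ => (x, s)) s h1 h2).hasDerivAt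
    refine intervalIntegral.integral_eq_sub_of_hasDerivAt (f := fun s => U x s)
      (fun s hs => hdU s (hu ▸ hs)) ?_
    exact (continuousOn_finsetSum _ fun i _ => hcont2 i).intervalIntegrable_of_Icc hab

lemma continuous_integral_time {N : ℕ} {T a b : ℝ} {v : Euc N → ℝ → ℝ} (ha : 0 < a) (hab : a ≤ b)
    (hb : b < T)
    (hv : ContinuousOn (fun p : Euc N × ℝ => v p.1 p.2) (Set.univ ×ˢ Set.Ioo (0:ℝ) T)) :
    Continuous (fun x => ∫ s in a..b, v x s) := by
  -- clamping the time variable to `[a, b]` makes the integrand globally continuous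
  have h1 : ∀ x, ∫ s in a..b, v x s = ∫ s in a..b, v x (max a (min s b)) := by
    intro x
    refine intervalIntegral.integral_congr fun s hs => ?_
    rw [Set.uIcc_of_le hab] at hs
    rw [min_eq_left hs.2, max_eq_right hs.1]
  simp_rw [h1]
  refine intervalIntegral.continuous_parametric_intervalIntegral_of_continuous' ?_ _ _
  have h2 : Continuous (fun p : Euc N × ℝ => (p.1, max a (min p.2 b))) := by fun_prop
  exact hv.comp_continuous h2 fun p =>
    ⟨trivial, ha.trans_le (le_max_left _ _), (max_le hab (min_le_right _ _)).trans_lt hb⟩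

/-! ### Barenblatt solutions -/

/-- The admissible range of parameters: `0 < m < (N - 2) / N`. -/
structure Par (N : ℕ) (m : ℝ) : Prop where
  m0 : 0 < m
  m1 : m < 1
  hN : 4 < N
  hd : 0 < (N : ℝ) - 2 - N * m

lemma par_of {N : ℕ} {m : ℝ} (hN : 4 < N) (hm0 : 0 < m)
    (hmu : m ≤ ((N : ℝ) - 4) / ((N : ℝ) - 2)) : Par N m := by
  have hN' : (4:ℝ) < N := by exact_mod_cast hN
  have h2 : 0 < (N:ℝ) - 2 := by linarith
  rw [le_div_iff₀ h2] at hmu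
  refine ⟨hm0, by nlinarith, hN, ?_⟩
  -- `(N - 4) / (N - 2) < (N - 2) / N` because `N (N - 4) < (N - 2) ^ 2`
  have : 0 < ((N : ℝ) - 2 - N * m) * (N - 2) := by nlinarith
  exact pos_of_mul_pos_left this h2.le

namespace Par
variable {N : ℕ} {m : ℝ}

lemma one_sub (h : Par N m) : 0 < 1 - m := by linarith [h.m1]
lemma Npos (h : Par N m) : (4:ℝ) < N := by exact_mod_cast h.hN
lemma apos (h : Par N m) : 0 < m / (1 - m) := div_pos h.m0 h.one_sub
lemma cst (h : Par N m) : 0 < Cst N m := by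
  have := h.hd
  have := h.m0
  refine div_pos (mul_pos (by positivity) (by linarith)) h.one_sub
lemma gam (h : Par N m) : gammaC N m = -1 / ((N : ℝ) - 2 - N * m) := by
  have := h.hd.ne'
  have := h.Npos
  unfold gammaC betaC
  field_simp
lemma gneg (h : Par N m) : gammaC N m < 0 := by
  rw [h.gam]; exact div_neg_of_neg_of_pos (by norm_num) h.hd
end Par

/-- The power `B_k ^ m` of the Barenblatt solution, on which the Laplacian acts. -/
def bM (N : ℕ) (m T k : ℝ) (x : Euc N) (t : ℝ) : ℝ :=
  (Cst N m * (T - t) / (k * (T - t) ^ (2 * gammaC N m) + ‖x‖ ^ 2)) ^ (m / (1 - m))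

section Barenblatt
variable {N : ℕ} {m T k : ℝ}

lemma den_pos (hk : 0 < k) {t : ℝ} (ht : t < T) (x : Euc N) :
    0 < k * (T - t) ^ (2 * gammaC N m) + ‖x‖ ^ 2 := by
  have : 0 < (T - t) ^ (2 * gammaC N m) := rpow_pos_of_pos (by linarith) _
  positivity

lemma base_pos (hp : Par N m) (hk : 0 < k) {t : ℝ} (ht : t < T) (x : Euc N) :
    0 < Cst N m * (T - t) / (k * (T - t) ^ (2 * gammaC N m) + ‖x‖ ^ 2) :=
  div_pos (mul_pos hp.cst (by linarith)) (den_pos hk ht x)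

lemma bM_pos (hp : Par N m) (hk : 0 < k) {t : ℝ} (ht : t < T) (x : Euc N) :
    0 < bM N m T k x t := rpow_pos_of_pos (base_pos hp hk ht x) _

lemma Bb_pos (hp : Par N m) (hk : 0 < k) {t : ℝ} (ht : t < T) (x : Euc N) :
    0 < Bb N m T k x t := rpow_pos_of_pos (base_pos hp hk ht x) _

lemma Bb_rpow (hp : Par N m) (hk : 0 < k) {t : ℝ} (ht : t < T) (x : Euc N) :
    Bb N m T k x t ^ m = bM N m T k x t := by
  unfold Bb bM
  rw [← rpow_mul (base_pos hp hk ht x).le]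
  congr 1; ring

lemma bM_rpow (hp : Par N m) (hk : 0 < k) {t : ℝ} (ht : t < T) (x : Euc N) :
    bM N m T k x t ^ (1 / m) = Bb N m T k x t := by
  rw [← Bb_rpow hp hk ht x, ← rpow_mul (Bb_pos hp hk ht x).le, mul_one_div_cancel hp.m0.ne',
    rpow_one]

lemma contDiffOn_base_rpow (hp : Par N m) (hk : 0 < k) (q : ℝ) :
    ContDiffOn ℝ (⊤ : ℕ∞) (fun p : Euc N × ℝ =>
      (Cst N m * (T - p.2) / (k * (T - p.2) ^ (2 * gammaC N m) + ‖p.1‖ ^ 2)) ^ q)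
      (Set.univ ×ˢ Set.Iio T) := by
  have h1 : ContDiffOn ℝ (⊤ : ℕ∞) (fun p : Euc N × ℝ => T - p.2) (Set.univ ×ˢ Set.Iio T) :=
    ContDiff.contDiffOn (by fun_prop)
  have h2 : ContDiffOn ℝ (⊤ : ℕ∞) (fun p : Euc N × ℝ => (T - p.2) ^ (2 * gammaC N m))
      (Set.univ ×ˢ Set.Iio T) :=
    h1.rpow_const_of_ne (fun p hp => by have := hp.2; simp at this; linarith)
  have h3 : ContDiffOn ℝ (⊤ : ℕ∞) (fun p : Euc N × ℝ => ‖p.1‖ ^ 2) (Set.univ ×ˢ Set.Iio T) :=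
    ContDiff.contDiffOn (contDiff_fst.norm_sq ℝ)
  exact ((contDiffOn_const.mul h1).div ((contDiffOn_const.mul h2).add h3)
    (fun p h => (den_pos hk h.2 p.1).ne')).rpow_const_of_ne
    (fun p h => (base_pos hp hk h.2 p.1).ne')

lemma contDiffOn_Bb (hp : Par N m) (hk : 0 < k) :
    ContDiffOn ℝ (⊤ : ℕ∞) (fun p : Euc N × ℝ => Bb N m T k p.1 p.2) (Set.univ ×ˢ Set.Iio T) :=
  contDiffOn_base_rpow hp hk _

lemma contDiffOn_bM (hp : Par N m) (hk : 0 < k) :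
    ContDiffOn ℝ (⊤ : ℕ∞) (fun p : Euc N × ℝ => bM N m T k p.1 p.2) (Set.univ ×ˢ Set.Iio T) :=
  contDiffOn_base_rpow hp hk _

lemma hasDerivAt_bM (hp : Par N m) (hk : 0 < k) {t : ℝ} (ht : t < T) (x : Euc N) :
    HasDerivAt (fun s => bM N m T k x s)
      (-(m / (1 - m)) * bM N m T k x t / (T - t) *
        (1 - 2 * gammaC N m * (k * (T - t) ^ (2 * gammaC N m)) /
          (k * (T - t) ^ (2 * gammaC N m) + ‖x‖ ^ 2))) t := by
  have hs : 0 < T - t := by linarith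
  have hD := den_pos (m := m) hk ht x
  have hy := base_pos hp hk ht x
  have h1 : HasDerivAt (fun s => T - s) (-1) t := by
    simpa using (hasDerivAt_id t).const_sub T
  have h2 := (h1.rpow_const (p := 2 * gammaC N m) (Or.inl hs.ne')).const_mul k
  have h3 := ((h1.const_mul (Cst N m)).div (h2.add_const (‖x‖ ^ 2)) hD.ne').rpow_const
    (p := m / (1 - m)) (Or.inl hy.ne')
  refine h3.congr_deriv ?_
  unfold bM
  simp only [Pi.div_apply]
  rw [rpow_sub_one hy.ne' (m / (1 - m)), rpow_sub_one hs.ne' (2 * gammaC N m)]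
  set Y := (Cst N m * (T - t) / (k * (T - t) ^ (2 * gammaC N m) + ‖x‖ ^ 2)) ^ (m / (1 - m))
  set W := (T - t) ^ (2 * gammaC N m)
  have := hp.cst.ne'
  have := hp.one_sub.ne'
  have hs' := hs.ne'
  have hD' := hD.ne'
  field_simp
  ring

lemma hasLap_bM (hp : Par N m) (hk : 0 < k) {t : ℝ} (ht : t < T) (x : Euc N) :
    HasLap (fun y => bM N m T k y t) x
      (1 / m * (Cst N m * (T - t) / (k * (T - t) ^ (2 * gammaC N m) + ‖x‖ ^ 2)) *
      (-(m / (1 - m)) * bM N m T k x t / (T - t) *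
        (1 - 2 * gammaC N m * (k * (T - t) ^ (2 * gammaC N m)) /
          (k * (T - t) ^ (2 * gammaC N m) + ‖x‖ ^ 2)))) := by
  have hs : 0 < T - t := by linarith
  set c := k * (T - t) ^ (2 * gammaC N m) with hc
  have hc0 : 0 < c := mul_pos hk (rpow_pos_of_pos hs _)
  set A := Cst N m * (T - t) with hA
  have hA0 : 0 < A := mul_pos hp.cst hs
  set ω : ℝ → ℝ := fun r => (A / (c + r)) ^ (m / (1 - m)) with hω
  set ω' : ℝ → ℝ := fun r => -(m / (1 - m)) * (ω r / (c + r)) with hω'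
  have hd1 : ∀ r, 0 < c + r → HasDerivAt ω (ω' r) r := by
    intro r hr
    have h1 : HasDerivAt (fun r => c + r) 1 r := (hasDerivAt_id r).const_add c
    have h2 := ((hasDerivAt_const r A).div h1 hr.ne').rpow_const (p := m / (1 - m))
      (Or.inl (div_pos hA0 hr).ne')
    refine h2.congr_deriv ?_
    simp only [hω', hω, Pi.div_apply]
    rw [rpow_sub_one (div_pos hA0 hr).ne']
    have := hp.one_sub.ne'
    field_simp
    ring
  have hd2 : ∀ r, 0 < c + r → HasDerivAt ω'
      ((m / (1 - m)) * (m / (1 - m) + 1) * ω r / (c + r) ^ 2) r := by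
    intro r hr
    have h1 : HasDerivAt (fun r => c + r) 1 r := (hasDerivAt_id r).const_add c
    have h2 := ((hd1 r hr).div h1 hr.ne').const_mul (-(m / (1 - m)))
    refine h2.congr_deriv ?_
    simp only [hω']
    have := hp.one_sub.ne'
    field_simp
    ring
  have hx : 0 < c + ‖x‖ ^ 2 := by positivity
  have hev : ∀ᶠ r in 𝓝 (‖x‖ ^ 2), HasDerivAt ω (ω' r) r := by
    have : ∀ᶠ r in 𝓝 (‖x‖ ^ 2), 0 < c + r :=
      (continuous_const.add continuous_id).continuousAt.eventually (lt_mem_nhds hx)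
    filter_upwards [this] with r hr using hd1 r hr
  have key := hasLap_radial hev (hd2 _ hx)
  have hval : bM N m T k x t = ω (‖x‖ ^ 2) := rfl
  rw [hval]
  have hfun : (fun y : Euc N => bM N m T k y t) = fun y => ω (‖y‖ ^ 2) := rfl
  rw [hfun]
  convert key using 1
  rw [show ω' (‖x‖ ^ 2) = -(m / (1 - m)) * (ω (‖x‖ ^ 2) / (c + ‖x‖ ^ 2)) from rfl]
  rw [hA, Cst, hp.gam]
  have h1 := hp.one_sub.ne'
  have h2 := hp.hd.ne'
  have h3 := hp.m0.ne'
  have hs' := hs.ne'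
  obtain ⟨E, hE⟩ : ∃ E, E = (N : ℝ) - 2 - N * m := ⟨_, rfl⟩
  rw [← hE] at h2 ⊢
  rw [show (N : ℝ) - 2 - m * N = E by rw [hE]; ring]
  field_simp
  rw [hE]
  ring

lemma hasDerivAt_Bb (hp : Par N m) (hk : 0 < k) {t : ℝ} (ht : t < T) (x : Euc N) :
    HasDerivAt (fun s => Bb N m T k x s) (lapl (fun y => bM N m T k y t) x) t := by
  have hsm : ContDiffAt ℝ 2 (fun y => bM N m T k y t) x := by
    have h1 : ContDiffAt ℝ (⊤ : ℕ∞) (fun p : Euc N × ℝ => bM N m T k p.1 p.2) (x, t) :=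
      (contDiffOn_bM hp hk).contDiffAt ((isOpen_univ.prod isOpen_Iio).mem_nhds ⟨trivial, ht⟩)
    have h2 : ContDiffAt ℝ (⊤ : ℕ∞) (fun y : Euc N => (y, t)) x := by fun_prop
    have h3 : ContDiffAt ℝ (⊤ : ℕ∞) (fun y => bM N m T k y t) x :=
      ContDiffAt.comp (g := fun p : Euc N × ℝ => bM N m T k p.1 p.2)
        (f := fun y : Euc N => (y, t)) x h1 h2
    exact h3.of_le (WithTop.coe_le_coe.2 le_top)
  have hb := bM_pos hp hk ht x
  have h1 := (hasDerivAt_bM hp hk ht x).rpow_const (p := 1 / m) (Or.inl hb.ne')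
  have h2 : (fun s => Bb N m T k x s) =ᶠ[𝓝 t] fun s => bM N m T k x s ^ (1 / m) := by
    filter_upwards [isOpen_Iio.mem_nhds ht] with s hs using (bM_rpow hp hk hs x).symm
  refine (h1.congr_of_eventuallyEq h2).congr_deriv ?_
  rw [(hasLap_lapl hsm).unique (hasLap_bM hp hk ht x)]
  have h4 : bM N m T k x t ^ (1 / m - 1) =
      Cst N m * (T - t) / (k * (T - t) ^ (2 * gammaC N m) + ‖x‖ ^ 2) := by
    unfold bM
    rw [← rpow_mul (base_pos hp hk ht x).le]
    have : m / (1 - m) * (1 / m - 1) = 1 := by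
      have := hp.one_sub.ne'
      have := hp.m0.ne'
      field_simp
    rw [this, rpow_one]
  rw [h4]
  ring

lemma Bb_eq (hp : Par N m) (hk : 0 < k) (x : Euc N) {t : ℝ} (ht : t ∈ Set.Ioo (0:ℝ) T) :
    deriv (fun s => Bb N m T k x s) t = lapl (fun y => bM N m T k y t) x :=
  (hasDerivAt_Bb hp hk ht.2 x).deriv

/-- Barenblatt solutions decay in time at a rate controlled away from the extinction time. -/
lemma bM_deriv_bound (hp : Par N m) (hk : 0 < k) {t t₁ : ℝ} (ht : t ≤ t₁) (ht₁ : t₁ < T)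
    (x : Euc N) :
    let d := (-(m / (1 - m)) * bM N m T k x t / (T - t) *
        (1 - 2 * gammaC N m * (k * (T - t) ^ (2 * gammaC N m)) /
          (k * (T - t) ^ (2 * gammaC N m) + ‖x‖ ^ 2)))
    d ≤ 0 ∧ -d ≤ (m / (1 - m) / (T - t₁) * (1 - 2 * gammaC N m)) * bM N m T k x t := by
  intro d
  have hs : 0 < T - t := by linarith
  have hs1 : 0 < T - t₁ := by linarith
  have hb := bM_pos hp hk (by linarith : t < T) x
  have hD := den_pos (m := m) hk (by linarith : t < T) x
  have ha := hp.apos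
  have hg := hp.gneg
  set c := k * (T - t) ^ (2 * gammaC N m) with hc
  have hc0 : 0 < c := mul_pos hk (rpow_pos_of_pos hs _)
  have hr0 : 0 ≤ c / (c + ‖x‖ ^ 2) := by positivity
  have hr1 : c / (c + ‖x‖ ^ 2) ≤ 1 := by rw [div_le_one hD]; nlinarith [sq_nonneg ‖x‖]
  have hd : -d = (m / (1 - m)) * bM N m T k x t / (T - t) *
      (1 - 2 * gammaC N m * (c / (c + ‖x‖ ^ 2))) := by
    simp only [d]; ring
  have hf : 0 ≤ 1 - 2 * gammaC N m * (c / (c + ‖x‖ ^ 2)) := by nlinarith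
  have hf' : 1 - 2 * gammaC N m * (c / (c + ‖x‖ ^ 2)) ≤ 1 - 2 * gammaC N m := by nlinarith
  constructor
  · have : 0 ≤ -d := by rw [hd]; positivity
    linarith
  · rw [hd]
    have h1 : m / (1 - m) * bM N m T k x t / (T - t) ≤ m / (1 - m) * bM N m T k x t / (T - t₁) := by
      gcongr
    calc _ ≤ m / (1 - m) * bM N m T k x t / (T - t₁) * (1 - 2 * gammaC N m) := by
          gcongr
      _ = _ := by ring

lemma bM_le (hp : Par N m) (hk : 0 < k) {t : ℝ} (ht : t < T) {x : Euc N} (ht0 : 0 ≤ t)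
    (hx : 0 < ‖x‖) : bM N m T k x t ≤ (Cst N m * T / ‖x‖ ^ 2) ^ (m / (1 - m)) := by
  unfold bM
  have hs : 0 < T - t := by linarith
  have := hp.cst
  have h1 : 0 < (T - t) ^ (2 * gammaC N m) := rpow_pos_of_pos hs _
  refine rpow_le_rpow (base_pos hp hk ht x).le ?_ hp.apos.le
  gcongr
  · nlinarith
  · linarith
  · nlinarith [mul_pos hk h1]

end Barenblatt

/-! ### Supersolutions blowing up on a sphere, and regularity of solutions -/

lemma deriv_nonneg_of_left {D : ℝ → ℝ} {d t : ℝ} (h : HasDerivAt D d t)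
    (h1 : ∀ᶠ s in 𝓝[<] t, D s ≤ 0) (h0 : D t = 0) : 0 ≤ d := by
  have h2 := (hasDerivAt_iff_tendsto_slope.1 h).mono_left
    (nhdsWithin_mono t (fun s (hs : s < t) => hs.ne) : 𝓝[<] t ≤ 𝓝[≠] t)
  refine ge_of_tendsto h2 ?_
  filter_upwards [h1, self_mem_nhdsWithin] with s hs hst
  have hst' : s < t := hst
  rw [slope_def_field, h0, sub_zero]
  exact div_nonneg_of_nonpos hs (by linarith)

/-- The algebraic inequality making `(b + V) ^ q` a strict supersolution when `b ^ q` is a solution,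
`∂ₜ V = μ V` and `Δ V ≤ q p ^ (q - 1) V`. The term carrying `∂ₜ b` is absorbed by
Bernoulli's inequality. -/
lemma supersol_alg {q l b V bt Lb LV : ℝ} (hq : 1 < q) (hb : 0 < b) (hV : 0 < V)
    (hl : 0 ≤ l) (hbl : -bt ≤ l * b) (hLV : LV ≤ q * (b + V) ^ (q - 1) * V)
    (hLb : Lb = q * b ^ (q - 1) * bt) :
    Lb + LV < q * (b + V) ^ (q - 1) * (bt + (l * (q - 1) + 2) * V) := by
  set p := b + V with hp
  have hp0 : 0 < p := by positivity
  set X := p ^ (q - 1) with hX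
  set Y := b ^ (q - 1) with hY
  have hX0 : 0 < X := rpow_pos_of_pos hp0 _
  have hXY : Y ≤ X := rpow_le_rpow hb.le (by linarith) (by linarith)
  have key : (X - Y) * b ≤ (q - 1) * X * V := by
    have h1 := one_add_mul_self_le_rpow_one_add (s := -V / p) (p := q)
      (by rw [le_div_iff₀ hp0]; linarith) hq.le
    have h2 : 1 + -V / p = b / p := by field_simp; rw [hp]; ring
    rw [h2, div_rpow hb.le hp0.le, le_div_iff₀ (rpow_pos_of_pos hp0 _)] at h1
    have h3 : p ^ q = p * X := by
      rw [hX, ← rpow_one_add' hp0.le (by linarith)]; congr 1; ring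
    have h4 : b ^ q = b * Y := by
      rw [hY, ← rpow_one_add' hb.le (by linarith)]; congr 1; ring
    rw [h3, h4] at h1
    have h5 : (1 + q * (-V / p)) * (p * X) = p * X - q * V * X := by field_simp; ring
    rw [h5] at h1
    rw [hp] at h1
    nlinarith
  have h1 : (X - Y) * (-bt) ≤ l * ((q - 1) * X * V) := by
    calc (X - Y) * (-bt) ≤ (X - Y) * (l * b) :=
          mul_le_mul_of_nonneg_left hbl (by linarith)
      _ = l * ((X - Y) * b) := by ring
      _ ≤ _ := mul_le_mul_of_nonneg_left key hl
  have h2 : 0 < q * X * V := by positivity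
  have h3 := mul_le_mul_of_nonneg_left h1 (by linarith : (0:ℝ) ≤ q)
  rw [hLb]
  nlinarith

/-- The constant in the blow-up profile `phiR`. -/
def kap (N : ℕ) (m : ℝ) : ℝ := m * (8 * (m / (1 - m)) * (2 * (m / (1 - m)) + 1) + 4 * (m / (1 - m)) * N)

/-- A radial profile on the ball of radius `R`, infinite on its boundary, with
`Δ φ ≤ φ ^ (1 / m) / m`; it tends to `0` pointwise as `R → ∞`. -/
def phiR (N : ℕ) (m R : ℝ) (x : Euc N) : ℝ :=
  (kap N m * R ^ 2) ^ (m / (1 - m)) * (R ^ 2 - ‖x‖ ^ 2) ^ (-2 * (m / (1 - m)))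

lemma kap_pos {N : ℕ} {m : ℝ} (hp : Par N m) : 0 < kap N m := by
  have := hp.m0; have := hp.apos; have := hp.Npos
  unfold kap; positivity

lemma sq_gap {N : ℕ} {R : ℝ} {x : Euc N} (hx : ‖x‖ < R) : 0 < R ^ 2 - ‖x‖ ^ 2 := by
  nlinarith [norm_nonneg x]

lemma phiR_pos {N : ℕ} {m R : ℝ} (hp : Par N m) {x : Euc N} (hx : ‖x‖ < R) :
    0 < phiR N m R x := by
  have := kap_pos hp
  have : 0 < R := (norm_nonneg x).trans_lt hx
  exact mul_pos (rpow_pos_of_pos (by positivity) _) (rpow_pos_of_pos (sq_gap hx) _)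

lemma hasLap_phiR {N : ℕ} {m R : ℝ} (hp : Par N m) {x : Euc N} (hx : ‖x‖ < R) :
    ∃ L, HasLap (phiR N m R) x L ∧ L ≤ 1 / m * phiR N m R x ^ (1 / m - 1) * phiR N m R x := by
  set a := m / (1 - m) with ha
  have ha0 : 0 < a := hp.apos
  have hR : 0 < R := (norm_nonneg x).trans_lt hx
  have hκ := kap_pos hp
  set A := (kap N m * R ^ 2) ^ a with hA
  have hA0 : 0 < A := rpow_pos_of_pos (by positivity) _
  set ω : ℝ → ℝ := fun r => A * (R ^ 2 - r) ^ (-2 * a) with hω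
  set ω' : ℝ → ℝ := fun r => 2 * a * (ω r / (R ^ 2 - r)) with hω'
  have h1 : ∀ r, HasDerivAt (fun r => R ^ 2 - r) (-1) r := fun r => by
    simpa using (hasDerivAt_id r).const_sub (R ^ 2)
  have hd1 : ∀ r, 0 < R ^ 2 - r → HasDerivAt ω (ω' r) r := by
    intro r hr
    refine (((h1 r).rpow_const (p := -2 * a) (Or.inl hr.ne')).const_mul A).congr_deriv ?_
    simp only [hω', hω]
    rw [rpow_sub_one hr.ne']
    field_simp
  have hd2 : ∀ r, 0 < R ^ 2 - r → HasDerivAt ω' (2 * a * (2 * a + 1) * ω r / (R ^ 2 - r) ^ 2) r := by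
    intro r hr
    refine (((hd1 r hr).div (h1 r) hr.ne').const_mul (2 * a)).congr_deriv ?_
    simp only [hω']
    field_simp
    ring
  have hg := sq_gap hx
  have hev : ∀ᶠ r in 𝓝 (‖x‖ ^ 2), HasDerivAt ω (ω' r) r := by
    have : ∀ᶠ r in 𝓝 (‖x‖ ^ 2), 0 < R ^ 2 - r :=
      (continuous_const.sub continuous_id).continuousAt.eventually (lt_mem_nhds hg)
    filter_upwards [this] with r hr using hd1 r hr
  refine ⟨_, hasLap_radial hev (hd2 _ hg), ?_⟩
  have hφ : phiR N m R x = ω (‖x‖ ^ 2) := rfl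
  have hφ1 : phiR N m R x ^ (1 / m - 1) = kap N m * R ^ 2 / (R ^ 2 - ‖x‖ ^ 2) ^ 2 := by
    have h3 : a * (1 / m - 1) = 1 := by
      have := hp.one_sub.ne'
      have := hp.m0.ne'
      rw [ha]; field_simp
    unfold phiR
    rw [← ha, mul_rpow (by positivity) (by positivity), ← rpow_mul (by positivity), h3, rpow_one,
      ← rpow_mul hg.le, show -2 * a * (1 / m - 1) = -2 * (a * (1 / m - 1)) by ring, h3,
      mul_one, rpow_neg hg.le, div_eq_mul_inv]
    norm_num
  rw [hφ1, hφ]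
  set g := R ^ 2 - ‖x‖ ^ 2 with hgdef
  have hω0 : 0 < ω (‖x‖ ^ 2) := by
    have := phiR_pos hp hx
    rwa [hφ] at this
  have e1 : 4 * ‖x‖ ^ 2 * (2 * a * (2 * a + 1) * ω (‖x‖ ^ 2) / g ^ 2) + 2 * N * ω' (‖x‖ ^ 2)
      = (8 * a * (2 * a + 1) * ‖x‖ ^ 2 + 4 * a * N * g) * (ω (‖x‖ ^ 2) / g ^ 2) := by
    rw [show ω' (‖x‖ ^ 2) = 2 * a * (ω (‖x‖ ^ 2) / g) from rfl]
    field_simp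
    ring
  have e2 : 1 / m * (kap N m * R ^ 2 / g ^ 2) * ω (‖x‖ ^ 2)
      = ((8 * a * (2 * a + 1) + 4 * a * N) * R ^ 2) * (ω (‖x‖ ^ 2) / g ^ 2) := by
    have := hp.m0.ne'
    unfold kap
    rw [← ha]
    field_simp
  rw [e1, e2]
  refine mul_le_mul_of_nonneg_right ?_ (by positivity)
  have h5 : ‖x‖ ^ 2 ≤ R ^ 2 := by linarith
  have h6 : g ≤ R ^ 2 := by nlinarith [sq_nonneg ‖x‖]
  have h7 : 8 * a * (2 * a + 1) * ‖x‖ ^ 2 ≤ 8 * a * (2 * a + 1) * R ^ 2 := by gcongr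
  have h8 : 4 * a * N * g ≤ 4 * a * N * R ^ 2 := by gcongr
  linarith

section Solution
variable {N : ℕ} {m T k : ℝ} {u : Euc N → ℝ → ℝ} {u₀ : Euc N → ℝ}

lemma sol_nonneg (hT : 0 < T) (hsol : IsFDESol N m T u u₀) (x : Euc N) {t : ℝ}
    (ht : t ∈ Set.Ico 0 T) : 0 ≤ u x t := by
  rcases eq_or_lt_of_le ht.1 with h | h
  · subst h
    have hc : ContinuousWithinAt (fun s => u x s) (Set.Ico 0 T) 0 := by
      refine (hsol.2.2.1 (x, 0) ⟨trivial, ht⟩).comp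
        (f := fun s : ℝ => (x, s)) (by fun_prop) (fun s hs => ⟨trivial, hs⟩)
    have h2 : Tendsto (fun s => u x s) (𝓝[>] 0) (𝓝 (u x 0)) :=
      (hc.mono_left (nhdsWithin_le_of_mem (Ico_mem_nhdsGT hT)))
    refine ge_of_tendsto h2 ?_
    filter_upwards [Ioo_mem_nhdsGT hT] with s hs using (hsol.1 x s hs).le
  · exact (hsol.1 x t ⟨h, ht.2⟩).le

lemma sol_pow_contDiffOn (hsol : IsFDESol N m T u u₀) :
    ContDiffOn ℝ (⊤ : ℕ∞) (fun p : Euc N × ℝ => u p.1 p.2 ^ m) (Set.univ ×ˢ Set.Ioo (0:ℝ) T) :=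
  hsol.2.1.rpow_const_of_ne fun p hp => (hsol.1 p.1 p.2 hp.2).ne'

lemma sol_pow_hasLap (hsol : IsFDESol N m T u u₀) (x : Euc N) {t : ℝ} (ht : t ∈ Set.Ioo 0 T) :
    HasLap (fun y => u y t ^ m) x (lapl (fun y => u y t ^ m) x) := by
  have h1 : ContDiffAt ℝ (⊤ : ℕ∞) (fun p : Euc N × ℝ => u p.1 p.2 ^ m) (x, t) :=
    (sol_pow_contDiffOn hsol).contDiffAt ((isOpen_univ.prod isOpen_Ioo).mem_nhds ⟨trivial, ht⟩)
  have h2 : ContDiffAt ℝ (⊤ : ℕ∞) (fun y : Euc N => (y, t)) x := by fun_prop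
  have h3 : ContDiffAt ℝ (⊤ : ℕ∞) (fun y => u y t ^ m) x :=
    ContDiffAt.comp (g := fun p : Euc N × ℝ => u p.1 p.2 ^ m)
      (f := fun y : Euc N => (y, t)) x h1 h2
  exact hasLap_lapl (h3.of_le (WithTop.coe_le_coe.2 le_top))

lemma sol_hasDerivAt (hsol : IsFDESol N m T u u₀) (x : Euc N) {t : ℝ} (ht : t ∈ Set.Ioo 0 T) :
    HasDerivAt (fun s => u x s) (lapl (fun y => u y t ^ m) x) t := by
  rw [← hsol.2.2.2.2 x t ht]
  have h1 : DifferentiableAt ℝ (fun p : Euc N × ℝ => u p.1 p.2) (x, t) :=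
    (hsol.2.1.contDiffAt ((isOpen_univ.prod isOpen_Ioo).mem_nhds ⟨trivial, ht⟩)).differentiableAt
      (by simp)
  have h2 : DifferentiableAt ℝ (fun s : ℝ => (x, s)) t := by fun_prop
  exact (DifferentiableAt.comp (f := fun s : ℝ => (x, s)) t h1 h2).hasDerivAt

end Solution

/-! ### The comparison principle -/

/-- Comparison with the supersolution `(b + e ^ (μ t) φ_R) ^ (1 / m)` on a ball: since that
function is infinite on the lateral boundary, nothing is required of `u` at spatial infinity. -/
lemma ball_comparison {N : ℕ} {m T k : ℝ} {u : Euc N → ℝ → ℝ} {u₀ : Euc N → ℝ}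
    (hp : Par N m) (hk : 0 < k) (hT : 0 < T) (hsol : IsFDESol N m T u u₀)
    (hupper : ∀ x, u₀ x ≤ Bb N m T k x 0) {t₁ : ℝ} (ht₁ : 0 < t₁) (ht₁T : t₁ < T) :
    ∃ M : ℝ, ∀ R > 0, ∀ x : Euc N, ‖x‖ < R →
      u x t₁ ^ m < bM N m T k x t₁ + Real.exp (M * t₁) * phiR N m R x := by
  set a := m / (1 - m) with ha
  have ha0 : 0 < a := hp.apos
  set q := 1 / m with hq
  have hm0 := hp.m0
  have hq1 : 1 < q := by rw [hq, one_lt_div hm0]; exact hp.m1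
  set l := m / (1 - m) / (T - t₁) * (1 - 2 * gammaC N m) with hl
  have hl0 : 0 ≤ l := by
    have := hp.gneg
    have : 0 < T - t₁ := by linarith
    have : 0 ≤ 1 - 2 * gammaC N m := by linarith
    positivity
  set M := l * (q - 1) + 2 with hM
  refine ⟨M, fun R hR x₁ hx₁ => ?_⟩
  have hκ := kap_pos hp
  set A := (kap N m * R ^ 2) ^ a with hA
  have hA0 : 0 < A := rpow_pos_of_pos (by positivity) _
  -- the difference multiplied by `(R² - |x|²) ^ (2a)`, which is continuous up to the boundary
  set Θ : Euc N × ℝ → ℝ := fun p => (u p.1 p.2 ^ m - bM N m T k p.1 p.2) *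
    (R ^ 2 - ‖p.1‖ ^ 2) ^ (2 * a) - Real.exp (M * p.2) * A with hΘ
  have hΘiff : ∀ x : Euc N, ‖x‖ < R → ∀ t, Θ (x, t) = (u x t ^ m -
      (bM N m T k x t + Real.exp (M * t) * phiR N m R x)) * (R ^ 2 - ‖x‖ ^ 2) ^ (2 * a) := by
    intro x hx t
    have hg := sq_gap hx
    have h1 : phiR N m R x * (R ^ 2 - ‖x‖ ^ 2) ^ (2 * a) = A := by
      unfold phiR
      rw [← ha, ← hA, mul_assoc, ← rpow_add hg]
      rw [show -2 * a + 2 * a = 0 by ring, rpow_zero, mul_one]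
    simp only [hΘ]
    rw [← h1]; ring
  have hpos : ∀ x : Euc N, ‖x‖ < R → 0 < (R ^ 2 - ‖x‖ ^ 2) ^ (2 * a) := fun x hx =>
    rpow_pos_of_pos (sq_gap hx) _
  set S : Set (Euc N × ℝ) := Metric.closedBall 0 R ×ˢ Set.Icc 0 t₁ with hS
  have hScomp : IsCompact S := (isCompact_closedBall _ _).prod isCompact_Icc
  have hcont : ContinuousOn Θ S := by
    have hsub : S ⊆ Set.univ ×ˢ Set.Ico 0 T :=
      fun p hp => ⟨trivial, hp.2.1, hp.2.2.trans_lt ht₁T⟩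
    have h1 : ContinuousOn (fun p : Euc N × ℝ => u p.1 p.2 ^ m) S :=
      (hsol.2.2.1.mono hsub).rpow_const fun p _ => Or.inr hm0.le
    have h2 : ContinuousOn (fun p : Euc N × ℝ => bM N m T k p.1 p.2) S :=
      (contDiffOn_bM hp hk).continuousOn.mono fun p hp => ⟨trivial, hp.2.2.trans_lt ht₁T⟩
    have h3 : Continuous (fun p : Euc N × ℝ => (R ^ 2 - ‖p.1‖ ^ 2) ^ (2 * a)) :=
      Continuous.rpow_const (by fun_prop) fun p => Or.inr (by positivity)
    have h4 : Continuous (fun p : Euc N × ℝ => Real.exp (M * p.2) * A) := by fun_prop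
    exact ((h1.sub h2).mul h3.continuousOn).sub h4.continuousOn
  by_contra! hcon
  set K : Set (Euc N × ℝ) := S ∩ Θ ⁻¹' Set.Ici 0 with hK
  have hKcl : IsCompact K := by
    refine hScomp.of_isClosed_subset (hcont.preimage_isClosed_of_isClosed hScomp.isClosed
      isClosed_Ici) Set.inter_subset_left
  have hKne : K.Nonempty := by
    refine ⟨(x₁, t₁), ⟨by simpa using hx₁.le, ht₁.le, le_rfl⟩, ?_⟩
    change 0 ≤ Θ (x₁, t₁)
    rw [hΘiff x₁ hx₁]
    exact mul_nonneg (by linarith) (hpos x₁ hx₁).le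
  obtain ⟨⟨x, t⟩, ⟨⟨hxR, ht⟩, hΘ0⟩, hmin⟩ := hKcl.exists_isMinOn hKne continuous_snd.continuousOn
  have hΘ0' : 0 ≤ Θ (x, t) := hΘ0
  have hearly : ∀ y : Euc N, ‖y‖ < R → ∀ s, 0 ≤ s → s < t →
      u y s ^ m < bM N m T k y s + Real.exp (M * s) * phiR N m R y := by
    intro y hy s hs hst
    by_contra! hc
    have : (y, s) ∈ K := by
      refine ⟨⟨by simpa using hy.le, hs, hst.le.trans ht.2⟩, ?_⟩
      change 0 ≤ Θ (y, s)
      rw [hΘiff y hy]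
      exact mul_nonneg (by linarith) (hpos y hy).le
    have h2 : t ≤ s := hmin this
    linarith
  have hxR' : ‖x‖ < R := by
    have h1 : ‖x‖ ≤ R := by simpa using hxR
    rcases h1.lt_or_eq with h | h
    · exact h
    · exfalso
      have : Θ (x, t) = - (Real.exp (M * t) * A) := by
        simp only [hΘ]
        rw [h, sub_self, zero_rpow (by positivity)]; ring
      have : 0 < Real.exp (M * t) * A := by positivity
      linarith
  have htT : t < T := ht.2.trans_lt ht₁T
  have htouch : bM N m T k x t + Real.exp (M * t) * phiR N m R x ≤ u x t ^ m := by
    rw [hΘiff x hxR'] at hΘ0'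
    have := nonneg_of_mul_nonneg_left hΘ0' (hpos x hxR')
    linarith
  have ht0 : 0 < t := by
    rcases ht.1.lt_or_eq with h | h
    · exact h
    · exfalso
      have h' : t = 0 := h.symm
      rw [h'] at htouch
      have h1 : u x 0 ^ m ≤ bM N m T k x 0 := by
        rw [← Bb_rpow hp hk hT x]
        refine rpow_le_rpow (sol_nonneg hT hsol x ⟨le_rfl, hT⟩) ?_ hm0.le
        rw [hsol.2.2.2.1]; exact hupper x
      have h2 : 0 < Real.exp (M * 0) * phiR N m R x := mul_pos (exp_pos _) (phiR_pos hp hxR')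
      linarith
  have htI : t ∈ Set.Ioo 0 T := ⟨ht0, htT⟩
  -- by continuity in time the ordering persists, weakly, at the first touching time
  have hslice : ∀ y : Euc N, ‖y‖ < R →
      u y t ^ m ≤ bM N m T k y t + Real.exp (M * t) * phiR N m R y := by
    intro y hy
    have c1 : ContinuousAt (fun s => u y s ^ m) t :=
      (sol_hasDerivAt hsol y htI).continuousAt.rpow_const (Or.inr hm0.le)
    have c2 : ContinuousAt (fun s => bM N m T k y s + Real.exp (M * s) * phiR N m R y) t :=
      (hasDerivAt_bM hp hk htT y).continuousAt.add (by fun_prop)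
    refine le_of_tendsto_of_tendsto (b := 𝓝[<] t) (c1.tendsto.mono_left nhdsWithin_le_nhds)
      (c2.tendsto.mono_left nhdsWithin_le_nhds) ?_
    filter_upwards [Ioo_mem_nhdsLT ht0] with s hs using (hearly y hy s hs.1.le hs.2).le
  have heq : u x t ^ m = bM N m T k x t + Real.exp (M * t) * phiR N m R x :=
    le_antisymm (hslice x hxR') htouch
  obtain ⟨L, hL, hLle⟩ := hasLap_phiR hp hxR'
  have hb := bM_pos hp hk htT x
  have hφ := phiR_pos hp hxR'
  set b := bM N m T k x t with hbdef
  set V := Real.exp (M * t) * phiR N m R x with hV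
  have hV0 : 0 < V := by positivity
  -- space: a maximum of the difference
  have hlapb := hasLap_bM hp hk htT x
  have hspace := sub_nonpos.1
    (((sol_pow_hasLap hsol x htI).sub (hlapb.add (hL.const_mul (Real.exp (M * t))))).nonpos (by
      have : ∀ᶠ y in 𝓝 x, ‖y‖ < R := continuous_norm.continuousAt.eventually (gt_mem_nhds hxR')
      filter_upwards [this] with y hy
      have := hslice y hy
      rw [heq]
      linarith))
  -- time: the difference increases up to the touching time
  obtain ⟨hbt0, hbt⟩ := bM_deriv_bound hp hk ht.2 ht₁T x
  have hdb := hasDerivAt_bM hp hk htT x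
  rw [← hbdef] at hdb hbt0 hbt hspace
  set bt := (-(m / (1 - m)) * b / (T - t) *
        (1 - 2 * gammaC N m * (k * (T - t) ^ (2 * gammaC N m)) /
          (k * (T - t) ^ (2 * gammaC N m) + ‖x‖ ^ 2))) with hbtdef
  have hdV : HasDerivAt (fun s => Real.exp (M * s) * phiR N m R x) (M * V) t := by
    have h1 : HasDerivAt (fun s => M * s) M t := by simpa using (hasDerivAt_id t).const_mul M
    refine (h1.exp.mul_const (phiR N m R x)).congr_deriv ?_
    rw [hV]; ring
  have hdP := (hdb.add hdV).rpow_const (p := q) (Or.inl (by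
    change b + V ≠ 0
    positivity))
  have htime : 0 ≤ lapl (fun y => u y t ^ m) x - (bt + M * V) * q * (b + V) ^ (q - 1) := by
    have hroot : ∀ s, u x s = 0 ∨ 0 ≤ u x s → (u x s ^ m) ^ q = u x s := by
      intro s hs
      have h0 : 0 ≤ u x s := by rcases hs with h | h <;> simp [h]
      rw [← rpow_mul h0, hq, mul_one_div_cancel hm0.ne', rpow_one]
    refine deriv_nonneg_of_left ((sol_hasDerivAt hsol x htI).sub hdP) ?_ ?_
    · filter_upwards [Ioo_mem_nhdsLT ht0] with s hs
      have h0 : 0 ≤ u x s := sol_nonneg hT hsol x ⟨hs.1.le, hs.2.trans htT⟩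
      have h1 := (hearly x hxR' s hs.1.le hs.2).le
      have h2 := rpow_le_rpow (rpow_nonneg h0 m) h1 (by linarith : 0 ≤ q)
      rw [hroot s (Or.inr h0)] at h2
      simpa using h2
    · have h0 : 0 ≤ u x t := sol_nonneg hT hsol x ⟨ht0.le, htT⟩
      have h2 := hroot t (Or.inr h0)
      rw [heq] at h2
      simp only [Pi.sub_apply, Pi.add_apply]
      linarith
  have hLV : Real.exp (M * t) * L ≤ q * (b + V) ^ (q - 1) * V := by
    have hE : 1 ≤ Real.exp (M * t) := by
      rw [← Real.exp_zero]; apply Real.exp_le_exp.2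
      have : 0 ≤ l * (q - 1) := mul_nonneg hl0 (by linarith)
      have : 0 ≤ M := by linarith
      positivity
    have h1 : phiR N m R x ≤ b + V := by
      have : phiR N m R x ≤ V := by rw [hV]; exact le_mul_of_one_le_left hφ.le hE
      linarith
    have h2 : phiR N m R x ^ (q - 1) ≤ (b + V) ^ (q - 1) :=
      rpow_le_rpow hφ.le h1 (by linarith)
    calc Real.exp (M * t) * L ≤ Real.exp (M * t) * (q * phiR N m R x ^ (q - 1) * phiR N m R x) := by
          gcongr
      _ ≤ Real.exp (M * t) * (q * (b + V) ^ (q - 1) * phiR N m R x) := by gcongr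
      _ = _ := by rw [hV]; ring
  have hbq : b ^ (q - 1) =
      Cst N m * (T - t) / (k * (T - t) ^ (2 * gammaC N m) + ‖x‖ ^ 2) := by
    rw [hbdef]
    unfold bM
    rw [← rpow_mul (base_pos hp hk htT x).le]
    have : m / (1 - m) * (q - 1) = 1 := by
      have := hp.one_sub.ne'
      rw [hq]
      field_simp
    rw [this, rpow_one]
  have hfin := supersol_alg (q := q) (l := l) (b := b) (V := V) (bt := bt) hq1 hb hV0 hl0 hbt hLV rfl
  rw [hbq] at hfin
  have h9 : (bt + M * V) * q * (b + V) ^ (q - 1) = q * (b + V) ^ (q - 1) * (bt + M * V) := by ring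
  linarith

/-- Comparison principle: `u ≤ B_k` for all times, with no growth condition on `u`. -/
lemma comparison {N : ℕ} {m T k : ℝ} {u : Euc N → ℝ → ℝ} {u₀ : Euc N → ℝ}
    (hp : Par N m) (hk : 0 < k) (hT : 0 < T) (hsol : IsFDESol N m T u u₀)
    (hupper : ∀ x, u₀ x ≤ Bb N m T k x 0) (x : Euc N) {t : ℝ} (ht : t ∈ Set.Ioo 0 T) :
    u x t ^ m ≤ bM N m T k x t := by
  obtain ⟨M, hM⟩ := ball_comparison hp hk hT hsol hupper ht.1 ht.2
  have hκ := kap_pos hp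
  have ha0 := hp.apos
  -- `φ_R(x) → 0` as `R → ∞`
  have hφ : Tendsto (fun R : ℝ => phiR N m R x) atTop (𝓝 0) := by
    have h1 : Tendsto (fun R : ℝ => kap N m * (4 / R ^ 2)) atTop (𝓝 0) := by
      have : Tendsto (fun R : ℝ => R ^ 2) atTop atTop := tendsto_pow_atTop (by norm_num)
      simpa using (this.const_div_atTop 4).const_mul (kap N m)
    have h2 : Tendsto (fun R : ℝ => (kap N m * (4 / R ^ 2)) ^ (m / (1 - m))) atTop (𝓝 0) := by
      have := h1.rpow_const (p := m / (1 - m)) (Or.inr ha0.le)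
      rwa [zero_rpow ha0.ne'] at this
    refine tendsto_of_tendsto_of_tendsto_of_le_of_le' tendsto_const_nhds h2 ?_ ?_
    · filter_upwards [eventually_gt_atTop ‖x‖] with R hR using (phiR_pos hp hR).le
    · filter_upwards [eventually_gt_atTop (2 * ‖x‖), eventually_gt_atTop 0] with R hR hR0
      have hx : ‖x‖ < R := by linarith [norm_nonneg x]
      have hg := sq_gap hx
      have hg' : R ^ 2 / 2 ≤ R ^ 2 - ‖x‖ ^ 2 := by nlinarith [norm_nonneg x]
      have e1 : phiR N m R x = (kap N m * (R ^ 2 / (R ^ 2 - ‖x‖ ^ 2) ^ 2)) ^ (m / (1 - m)) := by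
        unfold phiR
        rw [show -2 * (m / (1 - m)) = (-2 : ℝ) * (m / (1 - m)) by ring, rpow_mul hg.le,
          ← mul_rpow (by positivity) (by positivity), rpow_neg hg.le]
        congr 1
        norm_num
        rw [div_eq_mul_inv]; ring
      rw [e1]
      refine rpow_le_rpow (by positivity) ?_ ha0.le
      refine mul_le_mul_of_nonneg_left ?_ hκ.le
      rw [div_le_div_iff₀ (by positivity) (by positivity)]
      nlinarith [sq_nonneg R]
  have h3 : Tendsto (fun R : ℝ => bM N m T k x t + Real.exp (M * t) * phiR N m R x) atTop
      (𝓝 (bM N m T k x t)) := by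
    simpa using (hφ.const_mul (Real.exp (M * t))).const_add (bM N m T k x t)
  refine ge_of_tendsto h3 ?_
  filter_upwards [eventually_gt_atTop ‖x‖, eventually_gt_atTop 0] with R hR hR0
  exact (hM R hR0 x hR).le

/-! ### Radial potentials and the maximum principle on annuli -/

/-- A continuous function dominated by an integrable radial one has a continuous radial majorant
with finite mass: its maximum over spheres. -/
lemma radial_majorant {N : ℕ} (hN : 4 < N) {g f : Euc N → ℝ} (hg : Continuous g)
    (hg0 : ∀ x, 0 ≤ g x) (hgf : ∀ x, g x ≤ f x) (hf : Integrable f volume) (hrad : IsRadial f) :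
    ∃ h : ℝ → ℝ, Continuous h ∧ (∀ s, 0 ≤ h s) ∧ (∀ x, g x ≤ h ‖x‖) ∧
      ∃ F : ℝ, 0 ≤ F ∧ ∀ r ≥ 1, ∫ s in (1:ℝ)..r, s ^ (N - 1) * h s ≤ F := by
  have : Nonempty (Fin N) := ⟨⟨0, by omega⟩⟩
  have hcomp : IsCompact (Metric.sphere (0 : Euc N) 1) := isCompact_sphere 0 1
  set e : Euc N := EuclideanSpace.single ⟨0, by omega⟩ (1:ℝ) with he
  have hen : ‖e‖ = 1 := by simp [he]
  have hemem : e ∈ Metric.sphere (0 : Euc N) 1 := by simp [hen]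
  have hcg : Continuous (Function.uncurry fun (s : ℝ) (θ : Euc N) => g (s • θ)) := by
    simp only [Function.uncurry_def]; fun_prop
  set h : ℝ → ℝ := fun s => sSup ((fun θ : Euc N => g (s • θ)) '' Metric.sphere 0 1) with hh
  have hc : Continuous h := hcomp.continuous_sSup hcg
  have hbdd : ∀ s : ℝ, BddAbove ((fun θ : Euc N => g (s • θ)) '' Metric.sphere 0 1) := fun s =>
    hcomp.bddAbove_image (hg.comp (continuous_const_smul s)).continuousOn
  have hle : ∀ (s : ℝ) (θ : Euc N), ‖θ‖ = 1 → g (s • θ) ≤ h s := fun s θ hθ =>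
    le_csSup (hbdd s) ⟨θ, by simpa using hθ, rfl⟩
  have h0 : ∀ s, 0 ≤ h s := fun s => (hg0 _).trans (hle s e hen)
  have hφ : ∀ s, h s ≤ f (s • e) := by
    intro s
    refine csSup_le ⟨_, e, hemem, rfl⟩ ?_
    rintro _ ⟨θ, hθ, rfl⟩
    have hθ' : ‖θ‖ = 1 := by simpa using hθ
    refine (hgf _).trans (hrad _ _ ?_).le
    rw [norm_smul, norm_smul, hθ', hen]
  refine ⟨h, hc, h0, ?_, ?_⟩
  · intro x
    by_cases hx : x = 0
    · have := hle 0 e hen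
      simpa [hx] using this
    · have hx' : ‖x‖ ≠ 0 := norm_ne_zero_iff.2 hx
      have := hle ‖x‖ (‖x‖⁻¹ • x) (by rw [norm_smul]; simp [hx'])
      rwa [smul_smul, mul_inv_cancel₀ hx', one_smul] at this
  · have hfe : f = fun x => (fun s : ℝ => f (s • e)) ‖x‖ := by
      funext x
      exact hrad _ _ (by rw [norm_smul, hen]; simp)
    have hint : IntegrableOn (fun s : ℝ => s ^ (N - 1) * f (s • e)) (Set.Ioi 0) := by
      rw [hfe] at hf
      have := (MeasureTheory.integrable_fun_norm_addHaar (volume : Measure (Euc N))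
        (f := fun s : ℝ => f (s • e))).1 hf
      simpa using this
    refine ⟨∫ s in Set.Ioi (0:ℝ), s ^ (N - 1) * f (s • e), ?_, ?_⟩
    · refine setIntegral_nonneg measurableSet_Ioi fun s hs => ?_
      have hs' : (0:ℝ) < s := hs
      exact mul_nonneg (by positivity) ((h0 s).trans (hφ s))
    · intro r hr
      rw [intervalIntegral.integral_of_le hr]
      have hsub : Set.Ioc 1 r ⊆ Set.Ioi (0:ℝ) := fun s hs => lt_trans one_pos hs.1
      refine (setIntegral_mono_on ?_ (hint.mono_set hsub) measurableSet_Ioc fun s hs => ?_).trans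
        (setIntegral_mono_set hint ?_ (LE.le.eventuallyLE hsub))
      · have : Continuous fun s : ℝ => s ^ (N - 1) * h s := by fun_prop
        exact (this.integrableOn_Icc).mono_set Set.Ioc_subset_Icc_self
      · have hs' : (0:ℝ) < s := hsub hs
        exact mul_le_mul_of_nonneg_left (hφ s) (by positivity)
      · filter_upwards [self_mem_ae_restrict measurableSet_Ioi] with s hs
        have hs' : (0:ℝ) < s := hs
        exact mul_nonneg (by positivity) ((h0 s).trans (hφ s))

/-- The radial Newtonian potential of `h` on an annulus, written in the variable `ρ = |x| ^ 2`:
`Δ ω(|x| ^ 2) = -h(|x|)`, with decay governed by the mass of `h` and of a charge `A` carried by the unit ball. -/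
lemma radial_potential {N : ℕ} (hN : 4 < N) {h : ℝ → ℝ} (hc : Continuous h) (h0 : ∀ s, 0 ≤ h s)
    {A F R : ℝ} (hA : 0 ≤ A) (hR : 2 ≤ R)
    (hF : ∀ r ∈ Set.Icc 1 R, ∫ s in (1:ℝ)..r, s ^ (N - 1) * h s ≤ F) :
    ∃ ω ω' : ℝ → ℝ, (∀ ρ > 0, HasDerivAt ω (ω' ρ) ρ) ∧
      (∀ ρ > 0, ∃ ω'', HasDerivAt ω' ω'' ρ ∧ 4 * ρ * ω'' + 2 * N * ω' ρ = -h (√ρ)) ∧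
      (∀ ρ ∈ Set.Icc 1 (R ^ 2), 0 ≤ ω ρ ∧
        ω ρ ≤ (A + F) / (N - 2) * ρ ^ (1 - (N : ℝ) / 2)) ∧ A / (2 * (N - 2)) ≤ ω 1 := by
  have hN' : (4:ℝ) < N := by exact_mod_cast hN
  have hhc : Continuous fun s : ℝ => s ^ (N - 1) * h s := by fun_prop
  set K : ℝ → ℝ := fun r => A + ∫ s in (1:ℝ)..r, s ^ (N - 1) * h s with hK
  have hKd : ∀ r, HasDerivAt K (r ^ (N - 1) * h r) r := fun r =>
    (intervalIntegral.integral_hasDerivAt_right (hhc.intervalIntegrable _ _)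
      (hhc.stronglyMeasurableAtFilter _ _) hhc.continuousAt).const_add A
  have hKc : Continuous K := continuous_iff_continuousAt.2 fun r => (hKd r).continuousAt
  have hKlow : ∀ r ≥ 1, A ≤ K r := by
    intro r hr
    have : 0 ≤ ∫ s in (1:ℝ)..r, s ^ (N - 1) * h s :=
      intervalIntegral.integral_nonneg hr fun s hs => by
        have : 0 < s := by linarith [hs.1]
        exact mul_nonneg (by positivity) (h0 s)
    simp only [hK]; linarith
  set ω' : ℝ → ℝ := fun ρ => -(1 / 2 * (ρ ^ (-(N : ℝ) / 2) * K (√ρ))) with hω'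
  set ω : ℝ → ℝ := fun ρ => ∫ σ in ρ..R ^ 2, 1 / 2 * (σ ^ (-(N : ℝ) / 2) * K (√σ)) with hω
  have hcon : ContinuousOn (fun σ : ℝ => 1 / 2 * (σ ^ (-(N : ℝ) / 2) * K (√σ))) (Set.Ioi 0) := by
    refine continuousOn_const.mul (ContinuousOn.mul ?_ (by fun_prop))
    exact continuousOn_id.rpow_const fun σ hσ => Or.inl (ne_of_gt hσ)
  have hR2 : (4:ℝ) ≤ R ^ 2 := by nlinarith
  have hint : ∀ ρ > 0, IntervalIntegrable (fun σ : ℝ => 1 / 2 * (σ ^ (-(N : ℝ) / 2) * K (√σ)))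
      volume ρ (R ^ 2) := fun ρ hρ => (hcon.mono fun σ hσ => by
        have h1 := hσ.1
        have h2 : 0 < min ρ (R ^ 2) := lt_min hρ (by linarith)
        exact h2.trans_le h1).intervalIntegrable
  have hpow : ∀ ρ ∈ Set.Icc 1 (R ^ 2), ∀ c : ℝ,
      ∫ σ in ρ..R ^ 2, 1 / 2 * (σ ^ (-(N : ℝ) / 2) * c) =
        c / (N - 2) * (ρ ^ (1 - (N : ℝ) / 2) - (R ^ 2) ^ (1 - (N : ℝ) / 2)) := by
    intro ρ hρ c
    rw [intervalIntegral.integral_const_mul, intervalIntegral.integral_mul_const, integral_rpow]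
    · rw [show -(N : ℝ) / 2 + 1 = 1 - (N : ℝ) / 2 by ring]
      have h1 : (1 - (N : ℝ) / 2) ≠ 0 := by intro h; linarith
      have h2 : (N : ℝ) - 2 ≠ 0 := by intro h; linarith
      have h3 : (2 - (N : ℝ)) ≠ 0 := by intro h; linarith
      rw [show (1 - (N : ℝ) / 2) = (2 - N) / 2 by ring, show (2 - (N : ℝ)) = -(N - 2) by ring]
      field_simp
      ring
    · right
      refine ⟨by intro h; linarith, ?_⟩
      rw [Set.uIcc_of_le hρ.2]
      intro h
      linarith [h.1, hρ.1]
  have hintc : ∀ ρ ∈ Set.Icc 1 (R ^ 2), ∀ c : ℝ,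
      IntervalIntegrable (fun σ : ℝ => 1 / 2 * (σ ^ (-(N : ℝ) / 2) * c)) volume ρ (R ^ 2) := by
    intro ρ hρ c
    refine ContinuousOn.intervalIntegrable ?_
    refine continuousOn_const.mul (ContinuousOn.mul ?_ continuousOn_const)
    refine continuousOn_id.rpow_const fun σ hσ => Or.inl ?_
    rw [Set.uIcc_of_le hρ.2] at hσ
    have : 0 < σ := by linarith [hσ.1, hρ.1]
    exact this.ne'
  have hsq : ∀ σ : ℝ, 1 ≤ σ → 1 ≤ √σ := fun σ hσ => by rw [Real.one_le_sqrt]; exact hσ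
  have hlow : ∀ ρ ∈ Set.Icc 1 (R ^ 2),
      A / (N - 2) * (ρ ^ (1 - (N : ℝ) / 2) - (R ^ 2) ^ (1 - (N : ℝ) / 2)) ≤ ω ρ := by
    intro ρ hρ
    rw [← hpow ρ hρ]
    refine intervalIntegral.integral_mono_on hρ.2 (hintc ρ hρ _) (hint ρ (by linarith [hρ.1]))
      fun σ hσ => ?_
    have hσ1 : 1 ≤ σ := hρ.1.trans hσ.1
    have := hKlow _ (hsq σ hσ1)
    gcongr
  have hmon : ∀ ρ ∈ Set.Icc 1 (R ^ 2), (R ^ 2) ^ (1 - (N : ℝ) / 2) ≤ ρ ^ (1 - (N : ℝ) / 2) :=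
    fun ρ hρ => rpow_le_rpow_of_nonpos (by linarith [hρ.1]) hρ.2 (by linarith)
  have hN2 : (0:ℝ) < N - 2 := by linarith
  refine ⟨ω, ω', ?_, ?_, ?_, ?_⟩
  · intro ρ hρ
    exact intervalIntegral.integral_hasDerivAt_left (hint ρ hρ)
      (hcon.stronglyMeasurableAtFilter isOpen_Ioi ρ hρ)
      (hcon.continuousAt (isOpen_Ioi.mem_nhds hρ))
  · intro ρ hρ
    have hρ' : ρ ≠ 0 := ne_of_gt hρ
    have hsρ : 0 < √ρ := Real.sqrt_pos.2 hρ
    have d1 := (hasDerivAt_id ρ).rpow_const (p := -(N : ℝ) / 2) (Or.inl hρ')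
    have d2 := (hKd (√ρ)).comp ρ (Real.hasDerivAt_sqrt hρ')
    refine ⟨_, ((d1.mul d2).const_mul (1 / 2)).neg, ?_⟩
    simp only [hω', id, Function.comp]
    have e1 : ρ ^ (-(N : ℝ) / 2 - 1) = ρ ^ (-(N : ℝ) / 2) / ρ := rpow_sub_one hρ' _
    have e2 : ρ ^ (-(N : ℝ) / 2) * √ρ ^ (N - 1) * √ρ = 1 := by
      rw [mul_assoc, ← pow_succ, Nat.sub_add_cancel (by omega), Real.sqrt_eq_rpow,
        ← rpow_natCast, ← rpow_mul (le_of_lt hρ), ← rpow_add hρ]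
      rw [show -(N : ℝ) / 2 + 1 / 2 * N = 0 by ring, rpow_zero]
    have e3 : ρ = √ρ * √ρ := (Real.mul_self_sqrt (le_of_lt hρ)).symm
    rw [e1]
    have e4 : 4 * ρ * -(1 / 2 * (1 * (-(N : ℝ) / 2) * (ρ ^ (-(N : ℝ) / 2) / ρ) * K √ρ +
        ρ ^ (-(N : ℝ) / 2) * (√ρ ^ (N - 1) * h √ρ * (1 / (2 * √ρ))))) +
        2 * N * -(1 / 2 * (ρ ^ (-(N : ℝ) / 2) * K √ρ)) =
        - (ρ ^ (-(N : ℝ) / 2) * √ρ ^ (N - 1) * (ρ / √ρ)) * h √ρ := by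
      field_simp
      ring
    have e5 : ρ / √ρ = √ρ := Real.div_sqrt
    rw [e5, e2] at e4
    rw [e4]; ring
  · intro ρ hρ
    have h1 := hmon ρ hρ
    refine ⟨(mul_nonneg (by positivity) (by linarith)).trans (hlow ρ hρ), ?_⟩
    have hAF : 0 ≤ A + F := by
      have := hF 1 ⟨le_rfl, by linarith⟩
      rw [intervalIntegral.integral_same] at this
      linarith
    have h2 : ω ρ ≤ (A + F) / (N - 2) *
        (ρ ^ (1 - (N : ℝ) / 2) - (R ^ 2) ^ (1 - (N : ℝ) / 2)) := by
      rw [← hpow ρ hρ]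
      refine intervalIntegral.integral_mono_on hρ.2 (hint ρ (by linarith [hρ.1])) (hintc ρ hρ _)
        fun σ hσ => ?_
      have hσ1 : 1 ≤ σ := hρ.1.trans hσ.1
      have : K √σ ≤ A + F := by
        have := hF √σ ⟨hsq σ hσ1, Real.sqrt_le_iff.2 ⟨by linarith, hσ.2⟩⟩
        simp only [hK]; linarith
      gcongr
    refine h2.trans (mul_le_mul_of_nonneg_left ?_ (by positivity))
    have : 0 ≤ (R ^ 2) ^ (1 - (N : ℝ) / 2) := by positivity
    linarith
  · refine le_trans ?_ (hlow 1 ⟨le_rfl, by linarith⟩)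
    rw [one_rpow]
    have h1 : (R ^ 2) ^ (1 - (N : ℝ) / 2) ≤ 1 / 2 := by
      calc (R ^ 2) ^ (1 - (N : ℝ) / 2) ≤ (R ^ 2) ^ (-1 : ℝ) :=
            rpow_le_rpow_of_exponent_le (by linarith) (by linarith)
        _ = 1 / R ^ 2 := by rw [rpow_neg_one, one_div]
        _ ≤ 1 / 2 := by apply one_div_le_one_div_of_le <;> linarith
    calc A / (2 * ((N : ℝ) - 2)) = A / (N - 2) * (1 / 2) := by field_simp
      _ ≤ _ := by gcongr; linarith

/-- Maximum principle on the annulus `1 ≤ |x| ≤ R`, against the radial Newtonian potential. -/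
lemma annulus_bound {N : ℕ} (hN : 4 < N) {h : ℝ → ℝ} (hc : Continuous h) (h0 : ∀ s, 0 ≤ h s)
    {F R M η : ℝ} (hM : 0 ≤ M) (hη : 0 ≤ η) (hR : 2 ≤ R)
    (hF : ∀ r ∈ Set.Icc 1 R, ∫ s in (1:ℝ)..r, s ^ (N - 1) * h s ≤ F)
    {W L : Euc N → ℝ} (hW : Continuous W) (hL : ∀ x, HasLap W x (L x))
    (hLh : ∀ x, 1 ≤ ‖x‖ → ‖x‖ ≤ R → -h ‖x‖ < L x)
    (hW1 : ∀ x, ‖x‖ = 1 → W x ≤ M) (hWR : ∀ x, ‖x‖ = R → W x ≤ η)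
    (x : Euc N) (hx1 : 1 ≤ ‖x‖) (hxR : ‖x‖ ≤ R) :
    W x ≤ (2 * (N - 2) * M + F) / (N - 2) * (‖x‖ ^ 2) ^ (1 - (N : ℝ) / 2) + η := by
  have hN' : (4:ℝ) < N := by exact_mod_cast hN
  have hN2 : (0:ℝ) < N - 2 := by linarith
  obtain ⟨ω, ω', hd1, hd2, hb, hω1⟩ := radial_potential hN hc h0
    (A := 2 * (N - 2) * M) (by positivity) hR hF
  rw [show 2 * ((N : ℝ) - 2) * M / (2 * (N - 2)) = M by field_simp] at hω1
  set S : Set (Euc N) := {y | 1 ≤ ‖y‖ ∧ ‖y‖ ≤ R} with hS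
  have hScomp : IsCompact S := by
    refine (isCompact_closedBall (0 : Euc N) R).of_isClosed_subset ?_ fun y hy => by
      simpa using hy.2
    exact (isClosed_le continuous_const continuous_norm).inter
      (isClosed_le continuous_norm continuous_const)
  have hcont : ContinuousOn (fun y => W y - ω (‖y‖ ^ 2)) S := by
    refine hW.continuousOn.sub fun y hy => ?_
    have hy0 : 0 < ‖y‖ ^ 2 := by have := hy.1; positivity
    exact ((hd1 _ hy0).continuousAt.comp (f := fun y : Euc N => ‖y‖ ^ 2)
      (by fun_prop)).continuousWithinAt
  obtain ⟨y, hyS, hmax⟩ := hScomp.exists_isMaxOn ⟨x, hx1, hxR⟩ hcont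
  have hy0 : 0 < ‖y‖ ^ 2 := by have := hyS.1; positivity
  have hval : W y - ω (‖y‖ ^ 2) ≤ η := by
    rcases hyS.1.eq_or_lt with h1 | h1
    · have := hW1 y h1.symm
      rw [← h1, one_pow]
      linarith
    rcases hyS.2.eq_or_lt with h2 | h2
    · have := hWR y h2
      have h3 := (hb (‖y‖ ^ 2) ⟨by nlinarith, by rw [h2]⟩).1
      linarith
    exfalso
    obtain ⟨w, hw, hweq⟩ := hd2 _ hy0
    have h3 : HasLap (fun z : Euc N => ω (‖z‖ ^ 2)) y _ := hasLap_radial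
      (by filter_upwards [isOpen_Ioi.mem_nhds hy0] with r hr using hd1 r hr) hw
    rw [hweq, Real.sqrt_sq (norm_nonneg y)] at h3
    have h4 := ((hL y).sub h3).nonpos (by
      filter_upwards [continuous_norm.continuousAt.eventually (lt_mem_nhds h1),
        continuous_norm.continuousAt.eventually (gt_mem_nhds h2)] with z hz1 hz2
      exact hmax ⟨hz1.le, hz2.le⟩)
    have := hLh y hyS.1 hyS.2
    linarith
  have h5 : W x - ω (‖x‖ ^ 2) ≤ W y - ω (‖y‖ ^ 2) := hmax ⟨hx1, hxR⟩
  have h6 := (hb (‖x‖ ^ 2) ⟨by nlinarith, by nlinarith⟩).2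
  linarith

/-! ### The potential bound -/

/-- The key estimate: the time integral of `B ^ m - u ^ m` decays in space like the fundamental
solution of the Laplacian, uniformly in time. -/
lemma integral_bound {N : ℕ} {m T k : ℝ} {u : Euc N → ℝ → ℝ} {u₀ f : Euc N → ℝ}
    (hp : Par N m) (hk : 0 < k) (hT : 0 < T) (hsol : IsFDESol N m T u u₀)
    (hf : Integrable f volume) (hfrad : IsRadial f)
    (hupper : ∀ x, u₀ x ≤ Bb N m T k x 0)
    (hdiff : ∀ x, |u₀ x - Bb N m T k x 0| ≤ f x) :
    ∃ K : ℝ, 0 < K ∧ ∀ t t' : ℝ, 0 < t → t ≤ t' → t' < T → ∀ x : Euc N, 1 ≤ ‖x‖ →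
      ∫ s in t..t', (bM N m T k x s - u x s ^ m) ≤ K * (‖x‖ ^ 2) ^ (1 - (N : ℝ) / 2) := by
  have ha := hp.apos
  have hN' := hp.Npos
  have hN2 : (0:ℝ) < N - 2 := by linarith
  have hcst := hp.cst
  have hBc : ContinuousOn (fun p : Euc N × ℝ => Bb N m T k p.1 p.2) (Set.univ ×ˢ Set.Iio T) :=
    (contDiffOn_Bb hp hk).continuousOn
  have hDc : ContinuousOn (fun p : Euc N × ℝ => Bb N m T k p.1 p.2 - u p.1 p.2)
      (Set.univ ×ˢ Set.Ico 0 T) := (hBc.mono fun p hp => ⟨trivial, hp.2.2⟩).sub hsol.2.2.1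
  have hgc : Continuous fun x : Euc N => Bb N m T k x 0 - u x 0 := by
    rw [← continuousOn_univ]
    exact hDc.comp (f := fun x : Euc N => (x, (0:ℝ))) (by fun_prop)
      fun x _ => ⟨trivial, le_rfl, hT⟩
  obtain ⟨h, hc, h0, hgh, F, hF0, hF⟩ := radial_majorant hp.hN hgc
    (fun x => by rw [hsol.2.2.2.1]; linarith [hupper x])
    (fun x => by rw [hsol.2.2.2.1]; linarith [neg_abs_le (u₀ x - Bb N m T k x 0), hdiff x])
    hf hfrad
  set M : ℝ := T * (Cst N m * T / 1 ^ 2) ^ (m / (1 - m)) with hM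
  have hM0 : 0 < M := by positivity
  refine ⟨(2 * (N - 2) * M + (F + 1)) / (N - 2), by positivity, ?_⟩
  intro t t' ht htt' ht'T x hx
  have ht' : 0 < t' := ht.trans_le htt'
  have hx0 : 0 < ‖x‖ := by linarith
  have hcomp := fun (y : Euc N) (s : ℝ) (hs : s ∈ Set.Ioo 0 T) => comparison hp hk hT hsol hupper y hs
  have hvB : ContDiffOn ℝ (⊤ : ℕ∞) (fun p : Euc N × ℝ => bM N m T k p.1 p.2)
      (Set.univ ×ˢ Set.Ioo (0:ℝ) T) := (contDiffOn_bM hp hk).mono fun p hp => ⟨trivial, hp.2.2⟩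
  have hvu := sol_pow_contDiffOn (m := m) hsol
  have hslice : ∀ {v : Euc N → ℝ → ℝ}, ContinuousOn (fun p : Euc N × ℝ => v p.1 p.2)
      (Set.univ ×ˢ Set.Ioo (0:ℝ) T) → ∀ (y : Euc N) (ε : ℝ), 0 < ε → ε ≤ t' →
      IntervalIntegrable (fun s => v y s) volume ε t' := by
    intro v hv y ε hε hεt
    refine ContinuousOn.intervalIntegrable ?_
    rw [Set.uIcc_of_le hεt]
    exact hv.comp (f := fun s : ℝ => (y, s)) (by fun_prop)
      fun s hs => ⟨trivial, hε.trans_le hs.1, hs.2.trans_lt ht'T⟩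
  have hiB := hslice hvB.continuousOn
  have hiu := hslice (v := fun y s => u y s ^ m) hvu.continuousOn
  have key : ∀ R ≥ max 2 ‖x‖, ∫ s in t..t', (bM N m T k x s - u x s ^ m) ≤
      (2 * (N - 2) * M + (F + 1)) / (N - 2) * (‖x‖ ^ 2) ^ (1 - (N : ℝ) / 2) +
        T * (Cst N m * T / R ^ 2) ^ (m / (1 - m)) := by
    intro R hR
    have hR2 : 2 ≤ R := (le_max_left _ _).trans hR
    have hxR : ‖x‖ ≤ R := (le_max_right _ _).trans hR
    have hR0 : 0 < R := by linarith
    set δ : ℝ := 1 / R ^ N with hδ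
    have hδ0 : 0 < δ := by positivity
    -- an initial time at which the data are still `δ`-close to the initial ones
    obtain ⟨ε, hε0, hεt, hε⟩ : ∃ ε, 0 < ε ∧ ε ≤ t ∧ ∀ y : Euc N, ‖y‖ ≤ R →
        Bb N m T k y ε - u y ε < (Bb N m T k y 0 - u y 0) + δ := by
      have hScomp : IsCompact (Metric.closedBall (0 : Euc N) R ×ˢ Set.Icc 0 t) :=
        (isCompact_closedBall _ _).prod isCompact_Icc
      have huc := hScomp.uniformContinuousOn_of_continuous (hDc.mono fun p hp =>
        ⟨trivial, hp.2.1, hp.2.2.trans_lt (htt'.trans_lt ht'T)⟩)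
      obtain ⟨e, he, hue⟩ := Metric.uniformContinuousOn_iff.1 huc δ hδ0
      refine ⟨min (e / 2) t, lt_min (by linarith) ht, min_le_right _ _, fun y hy => ?_⟩
      have hm0 : 0 < min (e / 2) t := lt_min (by linarith) ht
      have h1 := hue (y, min (e / 2) t) ⟨by simpa using hy, hm0.le, min_le_right _ _⟩ (y, 0)
        ⟨by simpa using hy, le_rfl, ht.le⟩ (by
          rw [Prod.dist_eq, dist_self, Real.dist_eq, sub_zero, abs_of_pos hm0]
          exact max_lt he (by linarith [min_le_left (e / 2) t]))
      rw [Real.dist_eq] at h1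
      have := (abs_lt.1 h1).2
      simp only at this
      linarith
    have hεt' : ε ≤ t' := hεt.trans htt'
    have hF' : ∀ r ∈ Set.Icc 1 R, ∫ s in (1:ℝ)..r, s ^ (N - 1) * (h s + δ) ≤ F + 1 := by
      intro r hr
      have c1 : Continuous fun s : ℝ => s ^ (N - 1) * h s := by fun_prop
      have c2 : Continuous fun s : ℝ => s ^ (N - 1) * δ := by fun_prop
      have e1 : (fun s : ℝ => s ^ (N - 1) * (h s + δ)) =
          fun s => s ^ (N - 1) * h s + s ^ (N - 1) * δ := by funext s; ring
      rw [e1, intervalIntegral.integral_add (c1.intervalIntegrable _ _) (c2.intervalIntegrable _ _)]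
      refine add_le_add (hF r hr.1) ?_
      have h3 : ∫ s in (1:ℝ)..r, s ^ (N - 1) * δ ≤ ∫ s in (1:ℝ)..r, R ^ (N - 1) * δ := by
        refine intervalIntegral.integral_mono_on hr.1 (c2.intervalIntegrable _ _)
          intervalIntegrable_const fun s hs => ?_
        have : 0 ≤ s := by linarith [hs.1]
        have : s ≤ R := hs.2.trans hr.2
        gcongr
      refine h3.trans ?_
      rw [intervalIntegral.integral_const, smul_eq_mul]
      have h4 : R ^ (N - 1) * δ * R = 1 := by
        rw [hδ, mul_right_comm, ← pow_succ, Nat.sub_add_cancel (by linarith [hp.hN])]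
        field_simp
      have h5 : 0 ≤ R ^ (N - 1) * δ := by positivity
      nlinarith [hr.2]
    set W : Euc N → ℝ := fun y => (∫ s in ε..t', bM N m T k y s) - ∫ s in ε..t', u y s ^ m with hW
    have hWeq : ∀ y, W y = ∫ s in ε..t', (bM N m T k y s - u y s ^ m) := fun y =>
      (intervalIntegral.integral_sub (hiB y ε hε0 hεt') (hiu y ε hε0 hεt')).symm
    have hWc : Continuous W := (continuous_integral_time hε0 hεt' ht'T hvB.continuousOn).sub
      (continuous_integral_time hε0 hεt' ht'T hvu.continuousOn)
    have hWL : ∀ y, HasLap W y ((Bb N m T k y t' - Bb N m T k y ε) - (u y t' - u y ε)) := fun y =>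
      (hasLap_integral hε0 hεt' ht'T hvB
        ((contDiffOn_Bb hp hk).mono fun p hp => ⟨trivial, hp.2.2⟩)
        (fun y s hs => Bb_eq hp hk y hs) y).sub
      (hasLap_integral hε0 hεt' ht'T hvu hsol.2.1 hsol.2.2.2.2 y)
    have hub : ∀ (y : Euc N) (s : ℝ), s ∈ Set.Ioo 0 T → u y s ≤ Bb N m T k y s := by
      intro y s hs
      rw [← Real.rpow_le_rpow_iff (sol_nonneg hT hsol y ⟨hs.1.le, hs.2⟩)
        (Bb_pos hp hk hs.2 y).le hp.m0, Bb_rpow hp hk hs.2]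
      exact hcomp y s hs
    have hWb : ∀ (y : Euc N), 0 < ‖y‖ → W y ≤ T * (Cst N m * T / ‖y‖ ^ 2) ^ (m / (1 - m)) := by
      intro y hy
      rw [hWeq]
      have h1 : ∫ s in ε..t', (bM N m T k y s - u y s ^ m) ≤
          ∫ s in ε..t', (Cst N m * T / ‖y‖ ^ 2) ^ (m / (1 - m)) := by
        refine intervalIntegral.integral_mono_on hεt'
          ((hiB y ε hε0 hεt').sub (hiu y ε hε0 hεt')) intervalIntegrable_const fun s hs => ?_
        have hs0 : 0 < s := hε0.trans_le hs.1
        have hsT : s < T := hs.2.trans_lt ht'T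
        have := bM_le hp hk hsT hs0.le hy
        have := rpow_nonneg (sol_nonneg hT hsol y ⟨hs0.le, hsT⟩) m
        linarith
      refine h1.trans ?_
      rw [intervalIntegral.integral_const, smul_eq_mul]
      gcongr
      linarith
    have hmain := annulus_bound hp.hN (h := fun s => h s + δ) (by fun_prop)
      (fun s => by have := h0 s; positivity) (F := F + 1) (M := M)
      (η := T * (Cst N m * T / R ^ 2) ^ (m / (1 - m))) hM0.le (by positivity) hR2 hF' hWc hWL
      (fun y hy1 hyR => by
        have h1 := hub y t' ⟨ht', ht'T⟩
        have h2 := hε y hyR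
        have h3 := hgh y
        linarith)
      (fun y hy => by have := hWb y (by rw [hy]; norm_num); rwa [hy] at this)
      (fun y hy => by have := hWb y (by rw [hy]; exact hR0); rwa [hy] at this) x hx hxR
    refine le_trans ?_ hmain
    rw [hWeq]
    have hnn : 0 ≤ ∫ s in ε..t, (bM N m T k x s - u x s ^ m) :=
      intervalIntegral.integral_nonneg hεt fun s hs =>
        sub_nonneg.2 (hcomp x s ⟨hε0.trans_le hs.1, hs.2.trans_lt (htt'.trans_lt ht'T)⟩)
    have hii := (hiB x ε hε0 hεt').sub (hiu x ε hε0 hεt')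
    rw [← intervalIntegral.integral_add_adjacent_intervals (a := ε) (b := t) (c := t')]
    · linarith
    · exact hii.mono_set (by
        rw [Set.uIcc_of_le hεt, Set.uIcc_of_le hεt']; exact Set.Icc_subset_Icc_right htt')
    · exact (hiB x t ht htt').sub (hiu x t ht htt')
  have hlim : Tendsto (fun R : ℝ =>
      (2 * (N - 2) * M + (F + 1)) / (N - 2) * (‖x‖ ^ 2) ^ (1 - (N : ℝ) / 2) +
        T * (Cst N m * T / R ^ 2) ^ (m / (1 - m))) atTop
      (𝓝 ((2 * (N - 2) * M + (F + 1)) / (N - 2) * (‖x‖ ^ 2) ^ (1 - (N : ℝ) / 2))) := by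
    have h1 : Tendsto (fun R : ℝ => Cst N m * T / R ^ 2) atTop (𝓝 0) :=
      (tendsto_pow_atTop (by norm_num)).const_div_atTop _
    have h2 := h1.rpow_const (p := m / (1 - m)) (Or.inr ha.le)
    rw [zero_rpow ha.ne'] at h2
    simpa using (h2.const_mul T).const_add
      ((2 * (N - 2) * M + (F + 1)) / (N - 2) * (‖x‖ ^ 2) ^ (1 - (N : ℝ) / 2))
  refine ge_of_tendsto hlim ?_
  filter_upwards [eventually_ge_atTop (max 2 ‖x‖)] with R hR using key R hR

/-! ### From the integral bound to a pointwise bound -/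

/-- The Aronson–Bénilan inequality says that `t ^ (-1 / (1 - m)) u` is nonincreasing in time. -/
lemma ab_bound {N : ℕ} {m T : ℝ} {u : Euc N → ℝ → ℝ} {u₀ : Euc N → ℝ} (hp : Par N m)
    (hsol : IsFDESol N m T u u₀)
    (hAB : ∀ x : Euc N, ∀ t ∈ Set.Ioo (0:ℝ) T,
      deriv (fun s => u x s) t ≤ u x t / ((1 - m) * t)) (x : Euc N) {t s : ℝ} (ht : 0 < t)
    (hts : t ≤ s) (hs2 : s ≤ 2 * t) (hsT : s < T) :
    u x s ^ m ≤ 2 ^ (m / (1 - m)) * u x t ^ m := by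
  have hm := hp.one_sub
  set b := 1 / (1 - m) with hb
  have hb0 : 0 < b := by positivity
  have hd : ∀ r ∈ Set.Ioo 0 T, HasDerivAt (fun r => u x r * r ^ (-b))
      (deriv (fun s => u x s) r * r ^ (-b) + u x r * (1 * (-b) * r ^ (-b - 1))) r := by
    intro r hr
    exact (sol_hasDerivAt hsol x hr).differentiableAt.hasDerivAt.mul
      ((hasDerivAt_id r).rpow_const (Or.inl hr.1.ne'))
  have hanti : AntitoneOn (fun r => u x r * r ^ (-b)) (Set.Ioo 0 T) := by
    refine antitoneOn_of_deriv_nonpos (convex_Ioo _ _)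
      (fun r hr => (hd r hr).continuousAt.continuousWithinAt) ?_ ?_
    · rw [interior_Ioo]
      exact fun r hr => (hd r hr).differentiableAt.differentiableWithinAt
    · rw [interior_Ioo]
      intro r hr
      rw [(hd r hr).deriv, rpow_sub_one hr.1.ne']
      have h1 := hAB x r hr
      have h2 : 0 < r ^ (-b) := rpow_pos_of_pos hr.1 _
      have h3 : u x r / ((1 - m) * r) = u x r * b / r := by rw [hb]; field_simp
      have h4 := mul_le_mul_of_nonneg_right h1 h2.le
      rw [h3] at h4
      have h5 : u x r * (1 * -b * (r ^ (-b) / r)) = -(u x r * b / r * r ^ (-b)) := by ring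
      rw [h5]; linarith
  have hs0 : 0 < s := ht.trans_le hts
  have htI : t ∈ Set.Ioo 0 T := ⟨ht, hts.trans_lt hsT⟩
  have h1 : u x s * s ^ (-b) ≤ u x t * t ^ (-b) := hanti htI ⟨hs0, hsT⟩ hts
  have hut := hsol.1 x t htI
  have hus := hsol.1 x s ⟨hs0, hsT⟩
  have h2 : (2 * t) ^ (-b) ≤ s ^ (-b) := rpow_le_rpow_of_nonpos hs0 hs2 (by linarith)
  have ht2 : 0 < t ^ (-b) := rpow_pos_of_pos ht _
  have h3 : u x s * 2 ^ (-b) ≤ u x t := by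
    rw [mul_rpow (by norm_num) ht.le] at h2
    have := (mul_le_mul_of_nonneg_left h2 hus.le).trans h1
    rw [← mul_assoc] at this
    exact le_of_mul_le_mul_right this ht2
  have h4 : u x s ≤ 2 ^ b * u x t := by
    rw [rpow_neg (by norm_num), ← div_eq_mul_inv, div_le_iff₀ (by positivity)] at h3
    linarith
  calc u x s ^ m ≤ (2 ^ b * u x t) ^ m := rpow_le_rpow hus.le h4 hp.m0.le
    _ = _ := by
      rw [mul_rpow (by positivity) hut.le, ← rpow_mul (by norm_num)]
      congr 2
      rw [hb]; ring

/-- In the outer region `|y| ≥ r₀ (T - t) ^ γ` the solution is bounded below by a multiple of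
the spatial tail of the Barenblatt solution. -/
lemma outer_lower {N : ℕ} {m T k : ℝ} {u : Euc N → ℝ → ℝ} {u₀ f : Euc N → ℝ}
    (hp : Par N m) (hk : 0 < k) (hT : 0 < T) (hsol : IsFDESol N m T u u₀)
    (hf : Integrable f volume) (hfrad : IsRadial f)
    (hupper : ∀ x, u₀ x ≤ Bb N m T k x 0)
    (hdiff : ∀ x, |u₀ x - Bb N m T k x 0| ≤ f x)
    (hAB : ∀ x : Euc N, ∀ t ∈ Set.Ioo (0:ℝ) T,
      deriv (fun s => u x s) t ≤ u x t / ((1 - m) * t)) :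
    ∃ r₀ c : ℝ, 1 ≤ r₀ ∧ 0 < c ∧ ∀ t, T / 2 ≤ t → t < T → T - t ≤ 1 → ∀ y : Euc N,
      r₀ * (T - t) ^ gammaC N m ≤ ‖y‖ →
      c * ((T - t) / ‖y‖ ^ 2) ^ (1 / (1 - m)) ≤ u y t := by
  obtain ⟨K, hK0, hK⟩ := integral_bound hp hk hT hsol hf hfrad hupper hdiff
  have hm := hp.one_sub
  have hcst := hp.cst
  have hg := hp.gneg
  set γ := gammaC N m with hγ
  set a := m / (1 - m) with ha
  have ha0 : 0 < a := hp.apos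
  set c1 : ℝ := Cst N m / 2 / (k * 2 ^ (-(2 * γ)) + 1) with hc1
  have hc10 : 0 < c1 := by positivity
  set e : ℝ := (N : ℝ) / 2 - 1 - a with he
  have he2 : 2 * e * (1 - m) = (N : ℝ) - 2 - N * m := by rw [he, ha]; field_simp; ring
  have he0 : 0 < e := by
    have h1 : 0 < (2 * (1 - m)) * e := by have := hp.hd; linarith
    exact pos_of_mul_pos_right h1 (by linarith)
  -- scaling: `γ` is the exponent matching the two decay rates
  have hγe : 2 * γ * (-e) = a + 1 := by
    rw [hγ, hp.gam, ← he2, ha]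
    field_simp
    ring
  obtain ⟨r₀, hr₀, hr1⟩ := (((tendsto_rpow_atTop (by linarith : 0 < 2 * e)).eventually_ge_atTop
    (4 * K / c1 ^ a)).and (eventually_ge_atTop 1)).exists
  refine ⟨r₀, (2 ^ (-(a + 1)) * c1 ^ a) ^ (1 / m), hr1, by positivity, ?_⟩
  intro t ht htT hS1 y hy
  set S := T - t with hS
  have hS0 : 0 < S := by linarith
  have ht0 : 0 < t := by linarith
  have hSγ1 : 1 ≤ S ^ γ := one_le_rpow_of_pos_of_le_one_of_nonpos hS0 hS1 hg.le
  have hSγy : S ^ γ ≤ ‖y‖ := le_trans (le_mul_of_one_le_left (by linarith) hr1) hy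
  have hy1 : 1 ≤ ‖y‖ := hSγ1.trans hSγy
  have hy0 : 0 < ‖y‖ := by linarith
  set ρ := ‖y‖ ^ 2 with hρ
  have hρ0 : 0 < ρ := by positivity
  set t' := t + S / 2 with ht'
  have htt' : t ≤ t' := by linarith
  have ht'T : t' < T := by linarith
  have hut := hsol.1 y t ⟨ht0, htT⟩
  set P := (c1 * (S / ρ)) ^ a with hP
  have hP0 : 0 < P := by positivity
  have hlow : ∀ s ∈ Set.Icc t t', P ≤ bM N m T k y s := by
    intro s hs
    have hsT : s < T := hs.2.trans_lt ht'T
    refine rpow_le_rpow (by positivity) ?_ ha0.le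
    have h1 : S / 2 ≤ T - s := by linarith [hs.2]
    have h2 : (T - s) ^ (2 * γ) ≤ 2 ^ (-(2 * γ)) * ρ := by
      calc (T - s) ^ (2 * γ) ≤ (S / 2) ^ (2 * γ) :=
            rpow_le_rpow_of_nonpos (by positivity) h1 (by linarith)
        _ = 2 ^ (-(2 * γ)) * (S ^ γ) ^ 2 := by
            rw [div_rpow hS0.le (by norm_num), rpow_neg (by norm_num), ← rpow_natCast,
              ← rpow_mul hS0.le, div_eq_inv_mul]
            congr 2
            push_cast; ring
        _ ≤ _ := mul_le_mul_of_nonneg_left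
            (pow_le_pow_left₀ (by linarith) hSγy 2) (by positivity)
    have h3 : k * (T - s) ^ (2 * γ) + ρ ≤ (k * 2 ^ (-(2 * γ)) + 1) * ρ := by
      have := mul_le_mul_of_nonneg_left h2 hk.le
      linarith
    calc c1 * (S / ρ) = Cst N m * (S / 2) / ((k * 2 ^ (-(2 * γ)) + 1) * ρ) := by
          rw [hc1]; field_simp
      _ ≤ Cst N m * (T - s) / (k * (T - s) ^ (2 * γ) + ρ) := by
          have := den_pos (m := m) hk hsT y
          gcongr
  have hint : S / 2 * (P - 2 ^ a * u y t ^ m) ≤ K * ρ ^ (1 - (N : ℝ) / 2) := by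
    refine le_trans ?_ (hK t t' ht0 htt' ht'T y hy1)
    have hsub : ∀ s ∈ Set.Icc t t', ((y, s) : Euc N × ℝ) ∈ Set.univ ×ˢ Set.Ioo (0:ℝ) T :=
      fun s hs => ⟨trivial, ht0.trans_le hs.1, hs.2.trans_lt ht'T⟩
    have hI : IntervalIntegrable (fun s => bM N m T k y s - u y s ^ m) volume t t' := by
      refine ContinuousOn.intervalIntegrable ?_
      rw [Set.uIcc_of_le htt']
      refine ContinuousOn.sub ?_ ?_
      · exact (contDiffOn_bM hp hk).continuousOn.comp (f := fun s : ℝ => (y, s)) (by fun_prop)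
          fun s hs => ⟨trivial, (hsub s hs).2.2⟩
      · exact (sol_pow_contDiffOn (m := m) hsol).continuousOn.comp (f := fun s : ℝ => (y, s))
          (by fun_prop) hsub
    have h1 : ∫ s in t..t', (P - 2 ^ a * u y t ^ m) ≤
        ∫ s in t..t', (bM N m T k y s - u y s ^ m) := by
      refine intervalIntegral.integral_mono_on htt' intervalIntegrable_const hI fun s hs => ?_
      have := ab_bound hp hsol hAB y ht0 hs.1 (by linarith [hs.2]) (hs.2.trans_lt ht'T)
      have := hlow s hs
      linarith
    rw [intervalIntegral.integral_const, smul_eq_mul] at h1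
    refine le_trans (le_of_eq ?_) h1
    rw [ht']; ring
  -- the choice of `r₀` makes the error at most half of the main term
  have hsmall : K * ρ ^ (1 - (N : ℝ) / 2) ≤ S / 4 * P := by
    have h1 : ρ ^ (-e) ≤ S ^ (a + 1) / r₀ ^ (2 * e) := by
      have h2 : (r₀ * S ^ γ) ^ 2 ≤ ρ := pow_le_pow_left₀ (by positivity) hy 2
      have h3 : ρ ^ (-e) ≤ ((r₀ * S ^ γ) ^ 2) ^ (-e) :=
        rpow_le_rpow_of_nonpos (by positivity) h2 (by linarith)
      refine h3.trans (le_of_eq ?_)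
      rw [mul_pow, mul_rpow (by positivity) (by positivity), ← rpow_natCast, ← rpow_natCast,
        ← rpow_mul (by positivity), ← rpow_mul (by positivity), ← rpow_mul (by positivity),
        div_eq_inv_mul, ← rpow_neg (by positivity)]
      congr 2
      · push_cast; ring
      · rw [← hγe]; push_cast; ring
    have h4 : ρ ^ (1 - (N : ℝ) / 2) = ρ ^ (-e) * ρ ^ (-a) := by
      rw [← rpow_add hρ0]; congr 1; rw [he]; ring
    have h5 : P = c1 ^ a * S ^ a * ρ ^ (-a) := by
      rw [hP, mul_rpow hc10.le (by positivity), div_rpow hS0.le hρ0.le, rpow_neg hρ0.le]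
      ring
    have h6 : K ≤ r₀ ^ (2 * e) * c1 ^ a / 4 := by
      have hc1a : 0 < c1 ^ a := by positivity
      rw [div_le_iff₀ hc1a] at hr₀
      linarith
    have hr0 : 0 < r₀ := by linarith
    calc K * ρ ^ (1 - (N : ℝ) / 2) = K * ρ ^ (-e) * ρ ^ (-a) := by rw [h4]; ring
      _ ≤ (r₀ ^ (2 * e) * c1 ^ a / 4) * (S ^ (a + 1) / r₀ ^ (2 * e)) * ρ ^ (-a) := by gcongr
      _ = S / 4 * P := by
        rw [h5, rpow_add_one hS0.ne']
        field_simp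
  have hum : 2 ^ (-(a + 1)) * c1 ^ a * (S / ρ) ^ a ≤ u y t ^ m := by
    have h1 : P / 2 ≤ 2 ^ a * u y t ^ m := by
      have : S * (P / 2 - 2 ^ a * u y t ^ m) ≤ 0 := by nlinarith
      have := nonpos_of_mul_nonpos_right this hS0
      linarith
    have h2 : P = c1 ^ a * (S / ρ) ^ a := mul_rpow hc10.le (by positivity)
    rw [mul_assoc, ← h2, rpow_neg (by norm_num), rpow_add_one (by norm_num)]
    have h3 : (0:ℝ) < 2 ^ a := by positivity
    rw [inv_mul_le_iff₀ (by positivity)]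
    linarith
  calc (2 ^ (-(a + 1)) * c1 ^ a) ^ (1 / m) * (S / ρ) ^ (1 / (1 - m))
      = (2 ^ (-(a + 1)) * c1 ^ a * (S / ρ) ^ a) ^ (1 / m) := by
        have h1 : a * (1 / m) = 1 / (1 - m) := by
          have := hp.m0.ne'
          rw [ha]; field_simp
        rw [mul_rpow (x := 2 ^ (-(a + 1)) * c1 ^ a) (by positivity) (by positivity),
          ← rpow_mul (x := S / ρ) (by positivity) a (1 / m), h1]
    _ ≤ (u y t ^ m) ^ (1 / m) := rpow_le_rpow (by positivity) hum (by have := hp.m0; positivity)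
    _ = u y t := by rw [← rpow_mul hut.le, mul_one_div_cancel hp.m0.ne', rpow_one]

/-! ### Rescaling -/

/-- The Barenblatt scaling `2 γ - 1 = -β (1 - m)`. -/
lemma scaling {N : ℕ} {m : ℝ} (hp : Par N m) (τ : ℝ) {A B : ℝ} (hA : 0 < A) (hB : 0 < B) :
    Real.exp (betaC N m * τ) * (A * Real.exp (-τ) /
      (Real.exp (-gammaC N m * τ) ^ 2 * B)) ^ (1 / (1 - m)) = (A / B) ^ (1 / (1 - m)) := by
  have h1 : A * Real.exp (-τ) / (Real.exp (-gammaC N m * τ) ^ 2 * B) =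
      Real.exp (-τ + 2 * gammaC N m * τ) * (A / B) := by
    have h2 : Real.exp (-gammaC N m * τ) ^ 2 * Real.exp (-τ + 2 * gammaC N m * τ) =
        Real.exp (-τ) := by
      rw [← Real.exp_nat_mul, ← Real.exp_add]; congr 1; push_cast; ring
    rw [← h2]
    field_simp
  rw [h1, mul_rpow (Real.exp_pos _).le (by positivity), ← Real.exp_mul, ← mul_assoc,
    ← Real.exp_add]
  have h3 : betaC N m * τ + (-τ + 2 * gammaC N m * τ) * (1 / (1 - m)) = 0 := by
    have := hp.hd.ne'
    have := hp.one_sub.ne'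
    rw [hp.gam, betaC]
    field_simp
    ring
  rw [h3, Real.exp_zero, one_mul]

/-- Appendix proposition: under the hypotheses of the appendix theorem, the
rescaled solution satisfies two-sided Barenblatt-type bounds
C₁/(|x|²+1)^{1/(1-m)} ≤ ũ(x,τ) ≤ C₂/(|x|²+1)^{1/(1-m)} for |x| ≥ r₀ and τ ≥ τ₀. -/
theorem appendix_two_sided_bounds (N : ℕ) (hN : 4 < N) (m T k : ℝ)
    (hm0 : 0 < m) (hmu : m ≤ ((N : ℝ) - 4) / ((N : ℝ) - 2))
    (hT : 0 < T) (hk : 0 < k)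
    (u : Euc N → ℝ → ℝ) (u₀ : Euc N → ℝ) (f : Euc N → ℝ)
    (hsol : IsFDESol N m T u u₀)
    (hf : Integrable f volume) (hfpos : ∀ x, 0 < f x) (hfrad : IsRadial f)
    (hupper : ∀ x, u₀ x ≤ Bb N m T k x 0)
    (hdiff : ∀ x, |u₀ x - Bb N m T k x 0| ≤ f x)
    (hAB : ∀ x : Euc N, ∀ t ∈ Set.Ioo (0:ℝ) T,
      deriv (fun s => u x s) t ≤ u x t / ((1 - m) * t)) :
    ∃ C₁ C₂ r₀ τ₀ : ℝ, 0 < C₁ ∧ 0 < C₂ ∧ 0 < r₀ ∧ 0 < τ₀ ∧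
      ∀ τ : ℝ, τ₀ ≤ τ → ∀ x : Euc N, r₀ ≤ ‖x‖ →
        C₁ / (‖x‖ ^ 2 + 1) ^ (1 / (1 - m)) ≤ rescaleSol N m T u x τ ∧
        rescaleSol N m T u x τ ≤ C₂ / (‖x‖ ^ 2 + 1) ^ (1 / (1 - m)) := by
  have hp := par_of hN hm0 hmu
  have hm := hp.one_sub
  have hcst := hp.cst
  obtain ⟨r₀, c, hr₀, hc, hlow⟩ := outer_lower hp hk hT hsol hf hfrad hupper hdiff hAB
  refine ⟨c, (Cst N m / min k 1) ^ (1 / (1 - m)), r₀, max 1 (-Real.log (T / 2)), hc,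
    by positivity, by linarith, by positivity, ?_⟩
  intro τ hτ x hx
  have hτ1 : 1 ≤ τ := (le_max_left _ _).trans hτ
  have hS1 : Real.exp (-τ) ≤ 1 := Real.exp_le_one_iff.2 (by linarith)
  have hS2 : Real.exp (-τ) ≤ T / 2 := by
    rw [← Real.le_log_iff_exp_le (by positivity)]
    linarith [(le_max_right 1 (-Real.log (T / 2))).trans hτ]
  have hS0 := Real.exp_pos (-τ)
  set E := Real.exp (-gammaC N m * τ) with hE
  have hE0 : 0 < E := Real.exp_pos _
  have hTt : T - (T - Real.exp (-τ)) = Real.exp (-τ) := by ring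
  have hy : ‖E • x‖ = E * ‖x‖ := by rw [norm_smul, Real.norm_eq_abs, abs_of_pos hE0]
  have hx0 : 0 < ‖x‖ := by linarith
  constructor
  · have h1 := hlow (T - Real.exp (-τ)) (by linarith) (by linarith) (by linarith) (E • x) (by
      rw [hTt, hy, ← Real.exp_mul, show -τ * gammaC N m = -gammaC N m * τ by ring, ← hE, mul_comm]
      gcongr)
    rw [hTt, hy] at h1
    have h2 := scaling hp τ (A := 1) (B := ‖x‖ ^ 2) one_pos (by positivity)
    rw [one_mul, ← hE, ← mul_pow] at h2
    calc c / (‖x‖ ^ 2 + 1) ^ (1 / (1 - m)) ≤ c * (1 / ‖x‖ ^ 2) ^ (1 / (1 - m)) := by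
          rw [div_rpow (by norm_num) (by positivity), one_rpow, mul_one_div]
          gcongr
          linarith
      _ = Real.exp (betaC N m * τ) *
          (c * (Real.exp (-τ) / (E * ‖x‖) ^ 2) ^ (1 / (1 - m))) := by rw [← h2]; ring
      _ ≤ _ := mul_le_mul_of_nonneg_left h1 (Real.exp_pos _).le
  · have htI : T - Real.exp (-τ) ∈ Set.Ioo 0 T := ⟨by linarith, by linarith⟩
    have h1 : u (E • x) (T - Real.exp (-τ)) ≤ Bb N m T k (E • x) (T - Real.exp (-τ)) := by
      rw [← Real.rpow_le_rpow_iff (hsol.1 _ _ htI).le (Bb_pos hp hk htI.2 _).le hm0,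
        Bb_rpow hp hk htI.2]
      exact comparison hp hk hT hsol hupper _ htI
    have h2 := scaling hp τ (A := Cst N m) (B := k + ‖x‖ ^ 2) hcst (by positivity)
    have h3 : Bb N m T k (E • x) (T - Real.exp (-τ)) =
        (Cst N m * Real.exp (-τ) / (E ^ 2 * (k + ‖x‖ ^ 2))) ^ (1 / (1 - m)) := by
      unfold Bb
      have h4 : Real.exp (-τ) ^ (2 * gammaC N m) = E ^ 2 := by
        rw [← Real.exp_mul, hE, ← Real.exp_nat_mul]; congr 1; push_cast; ring
      rw [hTt, hy, h4]
      congr 2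
      ring
    calc rescaleSol N m T u x τ
        ≤ Real.exp (betaC N m * τ) * Bb N m T k (E • x) (T - Real.exp (-τ)) :=
          mul_le_mul_of_nonneg_left h1 (Real.exp_pos _).le
      _ = (Cst N m / (k + ‖x‖ ^ 2)) ^ (1 / (1 - m)) := by rw [h3, h2]
      _ ≤ (Cst N m / min k 1 / (‖x‖ ^ 2 + 1)) ^ (1 / (1 - m)) := by
          refine rpow_le_rpow (by positivity) ?_ (by positivity)
          rw [div_div]
          have h5 : min k 1 ≤ k := min_le_left _ _
          have h6 : min k 1 ≤ 1 := min_le_right _ _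
          have h7 : 0 < min k 1 := lt_min hk one_pos
          gcongr
          nlinarith [sq_nonneg ‖x‖]
      _ = _ := div_rpow (by positivity) (by positivity) _
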